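/- arXiv:2004.11025 — 3 statements merged into one kernel-verified Lean document; each statement's English description precedes it below -/
import Mathlib

section
/- Let X and Y be Banach spaces over 𝕂 (= ℝ or ℂ). Then the set of compact bounded linear operators from X to Y which uniquely quasi attain their norm is dense, in the operator norm, in the space K(X,Y) of all compact operators from X to Y. -/
/-! Let `K` be the closure of the image of the unit ball under `T`. Since the span of `K` is
separable, countably many functionals separate its points, and their weighted values give a
continuous linear map `J` into `ℓ²` which is injective on that span. If `u` maximizes
`‖y‖ + ‖J y‖² / 2` over `K`, then completing the square shows that, up to a unimodular scalar, `u`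
is the only maximizer over `K` of `‖y‖ + |f y|`, where `f y = ⟪J u, J y⟫`. The operator
`A y = y + f y • u / ‖u‖` satisfies `‖A y‖ ≤ ‖y‖ + |f y|` with equality at `u`, so the norm of
`A ∘ T` is quasi attained only along the circle of `A u`. Scaling `J` makes `A` arbitrarily close
to the identity.
-/

open Filter

variable {𝕜 X Y : Type*} [RCLike 𝕜]
  [NormedAddCommGroup X] [NormedSpace 𝕜 X]
  [NormedAddCommGroup Y] [NormedSpace 𝕜 Y]

/-- `T` uniquely quasi attains its norm: there is `u ∈ Y` such that every sequence `(x_n)` in the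
closed unit ball with `‖T x_n‖ → ‖T‖` has a subsequence `(x_{σ(n)})` and a unimodular scalar `θ`
with `T x_{σ(n)} → θ • u`. -/
def UniquelyQuasiAttainsNorm (T : X →L[𝕜] Y) : Prop :=
  ∃ u : Y, ∀ x : ℕ → X, (∀ n, x n ∈ Metric.closedBall (0 : X) 1) →
    Tendsto (fun n => ‖T (x n)‖) atTop (nhds ‖T‖) →
    ∃ σ : ℕ → ℕ, StrictMono σ ∧ ∃ θ : 𝕜, ‖θ‖ = 1 ∧
      Tendsto (fun n => T (x (σ n))) atTop (nhds (θ • u))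

open scoped ENNReal InnerProductSpace

section HilbertEmbedding

theorem exists_continuousLinearMap_lp_apply_eq_of_summable_norm {𝔽 ι E : Type*}
    [NontriviallyNormedField 𝔽] [CompleteSpace 𝔽] [SeminormedAddCommGroup E] [NormedSpace 𝔽 E]
    (p : ℝ≥0∞) [Fact (1 ≤ p)] {g : ι → StrongDual 𝔽 E} (hg : Summable fun i => ‖g i‖) :
    ∃ J : E →L[𝔽] lp (fun _ : ι => 𝔽) p, ∀ y i, J y i = g i y := by
  classical
  let J (i : ι) : E →L[𝔽] lp (fun _ : ι => 𝔽) p :=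
    lp.singleContinuousLinearMap 𝔽 (fun _ => 𝔽) p i ∘L g i
  have hp : 0 < p := one_pos.trans_le Fact.out
  have hJ : Summable J := by
    refine .of_norm_bounded hg fun i => ContinuousLinearMap.opNorm_le_bound _ (norm_nonneg _) ?_
    intro y
    simpa only [J, ContinuousLinearMap.comp_apply, lp.singleContinuousLinearMap_apply,
      lp.norm_single hp] using (g i).le_opNorm y
  refine ⟨∑' i, J i, fun y i => ?_⟩
  have hsum : HasSum (fun k => J k y) ((∑' k, J k) y) :=
    hJ.hasSum.mapL (ContinuousLinearMap.apply 𝔽 _ y)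
  have hcoord : HasSum (fun k => J k y i) ((∑' k, J k) y i) :=
    Pi.hasSum.mp (hsum.map (lp.coeFnAddMonoidHom (fun _ : ι => 𝔽) p)
      lp.uniformContinuous_coe.continuous) i
  refine hcoord.unique ?_
  convert hasSum_single i fun k hk => ?_
  · exact (lp.single_apply_self (E := fun _ => 𝔽) p i (g i y)).symm
  · exact lp.single_apply_ne (E := fun _ => 𝔽) p k (g k y) hk.symm

variable (𝕜) in
theorem exists_seq_strongDual_separating_of_isSeparable {s : Set Y}
    (hs : TopologicalSpace.IsSeparable s) :
    ∃ g : ℕ → StrongDual 𝕜 Y, (∀ n, ‖g n‖ ≤ 1) ∧ ∀ y ∈ s, (∀ n, g n y = 0) → y = 0 := by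
  obtain ⟨c, hc, hsc⟩ := hs
  rcases c.eq_empty_or_nonempty with rfl | hne
  · exact ⟨0, by simp, fun y hy => by simpa using hsc hy⟩
  obtain ⟨d, rfl⟩ := hc.exists_eq_range hne
  choose g hg_norm hg_apply using fun n => exists_dual_vector'' 𝕜 (d n)
  refine ⟨g, hg_norm, fun y hy hgy => ?_⟩
  by_contra hy0
  obtain ⟨_, ⟨n, rfl⟩, hn⟩ :=
    Metric.mem_closure_iff.mp (hsc hy) (‖y‖ / 2) (half_pos (norm_pos_iff.mpr hy0))
  have hdn : ‖d n‖ ≤ ‖y - d n‖ := calc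
    ‖d n‖ = ‖g n (y - d n)‖ := by simp [hgy n, hg_apply n]
    _ ≤ ‖y - d n‖ := by simpa using (g n).le_of_opNorm_le (hg_norm n) (y - d n)
  have htri : ‖y‖ ≤ ‖y - d n‖ + ‖d n‖ := norm_le_norm_sub_add y (d n)
  rw [dist_eq_norm] at hn
  linarith

theorem exists_continuousLinearMap_lp_injOn_of_isSeparable (p : ℝ≥0∞) [Fact (1 ≤ p)]
    {V : Submodule 𝕜 Y} (hV : TopologicalSpace.IsSeparable (V : Set Y)) :
    ∃ J : Y →L[𝕜] lp (fun _ : ℕ => 𝕜) p, Set.InjOn J V := by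
  obtain ⟨g, hg_norm, hg⟩ := exists_seq_strongDual_separating_of_isSeparable 𝕜 hV
  have hsum : Summable fun n => ‖((1 / 2) ^ n : 𝕜) • g n‖ := by
    refine .of_nonneg_of_le (fun _ => norm_nonneg _) (fun n => ?_) summable_geometric_two
    calc ‖((1 / 2) ^ n : 𝕜) • g n‖ = (1 / 2) ^ n * ‖g n‖ := by simp [norm_smul]
      _ ≤ (1 / 2) ^ n := mul_le_of_le_one_right (by positivity) (hg_norm n)
  obtain ⟨J, hJ⟩ := exists_continuousLinearMap_lp_apply_eq_of_summable_norm p hsum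
  refine ⟨J, fun y hy z hz hyz => sub_eq_zero.mp (hg _ (V.sub_mem hy hz) fun n => ?_)⟩
  have hn : ((1 / 2) ^ n : 𝕜) • g n (y - z) = 0 := by
    rw [← smul_apply, ← hJ, map_sub, sub_eq_zero.mpr hyz, lp.coeFn_zero, Pi.zero_apply]
  exact (smul_eq_zero_iff_right (by simp)).mp hn

end HilbertEmbedding

theorem exists_smul_norm_inner_le_of_isMaxOn {α H : Type*} [SeminormedAddCommGroup H]
    [InnerProductSpace 𝕜 H] {K : Set α} {φ : α → ℝ} {j : α → H} {u y : α}
    (hu : IsMaxOn (fun w => φ w + ‖j w‖ ^ 2 / 2) K u) (hy : y ∈ K) :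
    ∃ θ : 𝕜, ‖θ‖ = 1 ∧
      φ y + ‖⟪j u, j y⟫_𝕜‖ + ‖j u - θ • j y‖ ^ 2 / 2 ≤ φ u + ‖⟪j u, j u⟫_𝕜‖ := by
  obtain ⟨θ, hθ, hrot⟩ := RCLike.exists_norm_eq_mul_self ⟪j u, j y⟫_𝕜
  have hsq : ‖j u - θ • j y‖ ^ 2 = ‖j u‖ ^ 2 - 2 * ‖⟪j u, j y⟫_𝕜‖ + ‖j y‖ ^ 2 := by
    rw [norm_sub_sq (𝕜 := 𝕜), inner_smul_right, ← hrot, RCLike.ofReal_re, norm_smul, hθ, one_mul]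
  have hself : ‖⟪j u, j u⟫_𝕜‖ = ‖j u‖ ^ 2 := by
    rw [← inner_self_re_eq_norm, inner_self_eq_norm_sq]
  have hmax : φ y + ‖j y‖ ^ 2 / 2 ≤ φ u + ‖j u‖ ^ 2 / 2 := hu hy
  exact ⟨θ, hθ, by linarith⟩

theorem exists_continuousLinearMap_norm_apply_eq_add (f : StrongDual 𝕜 Y) {u : Y}
    (hfu : f u = (‖f u‖ : 𝕜)) :
    ∃ A : Y →L[𝕜] Y, ‖A - 1‖ ≤ ‖f‖ ∧ (∀ y, ‖A y‖ ≤ ‖y‖ + ‖f y‖) ∧ ‖A u‖ = ‖u‖ + ‖f u‖ := by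
  let z : Y := ((‖u‖⁻¹ : ℝ) : 𝕜) • u
  have hz : ‖z‖ ≤ 1 := by
    simpa [z, norm_smul] using inv_mul_le_one (a := ‖u‖)
  refine ⟨1 + f.smulRight z, ?_, fun y => ?_, ?_⟩
  · rw [add_sub_cancel_left, ContinuousLinearMap.norm_smulRight_apply]
    exact mul_le_of_le_one_right (norm_nonneg f) hz
  · calc ‖y + f y • z‖ ≤ ‖y‖ + ‖f y • z‖ := norm_add_le _ _
      _ = ‖y‖ + ‖f y‖ * ‖z‖ := by rw [norm_smul]
      _ ≤ ‖y‖ + ‖f y‖ := by gcongr; exact mul_le_of_le_one_right (norm_nonneg _) hz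
  · rcases eq_or_ne u 0 with rfl | hu
    · simp
    have hu_norm : ‖u‖ ≠ 0 := norm_ne_zero_iff.mpr hu
    calc ‖u + f u • z‖ = ‖((1 + ‖f u‖ * ‖u‖⁻¹ : ℝ) : 𝕜) • u‖ := by
          rw [hfu]
          simp only [z, smul_smul, RCLike.norm_ofReal, abs_norm]
          push_cast
          rw [add_smul, one_smul]
      _ = (1 + ‖f u‖ * ‖u‖⁻¹) * ‖u‖ := by
          rw [norm_smul, RCLike.norm_of_nonneg (by positivity)]
      _ = ‖u‖ + ‖f u‖ := by field_simp

section UniqueMaximizer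

variable {K : Set Y}

theorem exists_continuousLinearMap_unique_norm_maximizer {H : Type*} [NormedAddCommGroup H]
    [InnerProductSpace 𝕜 H] (hK : IsCompact K) (hne : K.Nonempty) (J : Y →L[𝕜] H)
    (hJ : Set.InjOn J (Submodule.span 𝕜 K)) :
    ∃ A : Y →L[𝕜] Y, ∃ u ∈ K, ‖A - 1‖ ≤ ‖J‖ ^ 2 * ‖u‖ ∧
      ∀ y ∈ K, ‖A u‖ ≤ ‖A y‖ → ∃ θ : 𝕜, ‖θ‖ = 1 ∧ y = θ • u := by
  have hcont : Continuous fun y => ‖y‖ + ‖J y‖ ^ 2 / 2 := by fun_prop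
  obtain ⟨u, huK, hu⟩ := hK.exists_isMaxOn hne hcont.continuousOn
  let f : StrongDual 𝕜 Y := innerSL 𝕜 (J u) ∘L J
  have hf_apply (y : Y) : f y = ⟪J u, J y⟫_𝕜 := rfl
  have hf_norm : ‖f‖ ≤ ‖J‖ ^ 2 * ‖u‖ := calc
    ‖f‖ ≤ ‖innerSL 𝕜 (J u)‖ * ‖J‖ := ContinuousLinearMap.opNorm_comp_le _ _
    _ = ‖J u‖ * ‖J‖ := by rw [innerSL_apply_norm]
    _ ≤ ‖J‖ * ‖u‖ * ‖J‖ := by gcongr; exact J.le_opNorm u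
    _ = ‖J‖ ^ 2 * ‖u‖ := by ring
  obtain ⟨A, hA_near, hA_le, hAu⟩ := exists_continuousLinearMap_norm_apply_eq_add f
    (inner_self_ofReal_norm (J u)).symm
  refine ⟨A, u, huK, hA_near.trans hf_norm, fun y hy hAuy => ?_⟩
  obtain ⟨θ, hθ, hsq⟩ := exists_smul_norm_inner_le_of_isMaxOn (𝕜 := 𝕜) hu hy
  simp only [← hf_apply] at hsq
  have hdist : ‖J u - θ • J y‖ ^ 2 ≤ 0 := by linarith [hA_le y]
  have hJuy : J u = J (θ • y) := by
    rw [map_smul, ← sub_eq_zero, ← norm_eq_zero]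
    exact pow_eq_zero_iff two_ne_zero |>.mp (hdist.antisymm (sq_nonneg _))
  have hu_eq : u = θ • y :=
    hJ (Submodule.subset_span huK) (Submodule.smul_mem _ θ (Submodule.subset_span hy)) hJuy
  have hθ0 : θ ≠ 0 := norm_ne_zero_iff.mp (by simp [hθ])
  exact ⟨θ⁻¹, by simp [hθ], by rw [hu_eq, inv_smul_smul₀ hθ0]⟩

variable (𝕜) in
theorem exists_near_one_unique_norm_maximizer (hK : IsCompact K) (hne : K.Nonempty)
    {δ : ℝ} (hδ : 0 < δ) :
    ∃ A : Y →L[𝕜] Y, ‖A - 1‖ < δ ∧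
      ∃ u ∈ K, ∀ y ∈ K, ‖A u‖ ≤ ‖A y‖ → ∃ θ : 𝕜, ‖θ‖ = 1 ∧ y = θ • u := by
  obtain ⟨J, hJ⟩ := exists_continuousLinearMap_lp_injOn_of_isSeparable 2
    (hK.isSeparable.span (R := 𝕜))
  obtain ⟨R, hR⟩ := hK.isBounded.exists_norm_le
  obtain ⟨c, hc, hcδ⟩ := exists_pos_mul_lt hδ (‖J‖ ^ 2 * R)
  have hc_sqrt : ((√c : ℝ) : 𝕜) ≠ 0 := by simpa using (Real.sqrt_pos.mpr hc).ne'
  obtain ⟨A, u, huK, hA, huniq⟩ := exists_continuousLinearMap_unique_norm_maximizer hK hne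
    (((√c : ℝ) : 𝕜) • J) ((smul_right_injective _ hc_sqrt).comp_injOn hJ)
  refine ⟨A, ?_, u, huK, huniq⟩
  calc ‖A - 1‖ ≤ ‖((√c : ℝ) : 𝕜) • J‖ ^ 2 * ‖u‖ := hA
    _ = c * ‖J‖ ^ 2 * ‖u‖ := by
        rw [norm_smul, RCLike.norm_of_nonneg (Real.sqrt_nonneg c), mul_pow, Real.sq_sqrt hc.le]
    _ ≤ c * ‖J‖ ^ 2 * R := by gcongr; exact hR u huK
    _ = ‖J‖ ^ 2 * R * c := by ring
    _ < δ := hcδ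

end UniqueMaximizer

section CompactOperators

theorem norm_le_opNorm_of_mem_closure_image_closedBall {T : X →L[𝕜] Y} {y : Y}
    (hy : y ∈ closure (T '' Metric.closedBall 0 1)) : ‖y‖ ≤ ‖T‖ := by
  refine closure_minimal ?_ (isClosed_le continuous_norm continuous_const) hy
  rintro _ ⟨x, hx, rfl⟩
  exact T.unit_le_opNorm x (mem_closedBall_zero_iff.mp hx)

theorem uniquelyQuasiAttainsNorm_of_isCompact_closure {T : X →L[𝕜] Y}
    (hT : IsCompact (closure (T '' Metric.closedBall 0 1))) {u : Y}
    (hu : ∀ y ∈ closure (T '' Metric.closedBall 0 1), ‖y‖ = ‖T‖ →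
      ∃ θ : 𝕜, ‖θ‖ = 1 ∧ y = θ • u) :
    UniquelyQuasiAttainsNorm T := by
  refine ⟨u, fun x hx hlim => ?_⟩
  obtain ⟨y, hy, σ, hσ, hσy⟩ :=
    hT.tendsto_subseq fun n => subset_closure (Set.mem_image_of_mem T (hx n))
  have hy_norm : ‖y‖ = ‖T‖ := tendsto_nhds_unique hσy.norm (hlim.comp hσ.tendsto_atTop)
  obtain ⟨θ, hθ, rfl⟩ := hu y hy hy_norm
  exact ⟨σ, hσ, θ, hθ, hσy⟩

theorem uniquelyQuasiAttainsNorm_comp_of_unique_norm_maximizer {Z : Type*} [NormedAddCommGroup Z]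
    [NormedSpace 𝕜 Z] {T : X →L[𝕜] Y} (hT : IsCompact (closure (T '' Metric.closedBall 0 1)))
    (A : Y →L[𝕜] Z) {u : Y} (huK : u ∈ closure (T '' Metric.closedBall 0 1))
    (hu : ∀ y ∈ closure (T '' Metric.closedBall 0 1), ‖A u‖ ≤ ‖A y‖ →
      ∃ θ : 𝕜, ‖θ‖ = 1 ∧ y = θ • u) :
    IsCompact (closure ((A ∘L T) '' Metric.closedBall 0 1)) ∧
      UniquelyQuasiAttainsNorm (A ∘L T) := by
  have hclosure : closure ((A ∘L T) '' Metric.closedBall 0 1) =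
      A '' closure (T '' Metric.closedBall 0 1) := by
    rw [image_closure_of_isCompact hT A.continuous.continuousOn, Set.image_image]
    rfl
  have hcompact : IsCompact (closure ((A ∘L T) '' Metric.closedBall 0 1)) :=
    hclosure ▸ hT.image A.continuous
  refine ⟨hcompact, uniquelyQuasiAttainsNorm_of_isCompact_closure hcompact (u := A u) ?_⟩
  rw [hclosure]
  rintro _ ⟨y, hy, rfl⟩ hAy
  have hAu : ‖A u‖ ≤ ‖A ∘L T‖ :=
    norm_le_opNorm_of_mem_closure_image_closedBall (hclosure ▸ Set.mem_image_of_mem A huK)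
  obtain ⟨θ, hθ, rfl⟩ := hu y hy (hAu.trans_eq hAy.symm)
  exact ⟨θ, hθ, map_smul A θ u⟩

end CompactOperators

theorem compact_uniquely_quasi_attaining_dense_general
    (T : X →L[𝕜] Y) (hT : IsCompact (closure (⇑T '' Metric.closedBall 0 1)))
    (ε : ℝ) (hε : 0 < ε) :
    ∃ S : X →L[𝕜] Y, IsCompact (closure (⇑S '' Metric.closedBall 0 1)) ∧
      UniquelyQuasiAttainsNorm S ∧ ‖S - T‖ < ε := by
  have hne : (closure (T '' Metric.closedBall 0 1)).Nonempty :=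
    ((Metric.nonempty_closedBall.mpr zero_le_one).image T).closure
  obtain ⟨δ, hδ, hδε⟩ := exists_pos_mul_lt hε ‖T‖
  obtain ⟨A, hA, u, huK, huniq⟩ := exists_near_one_unique_norm_maximizer 𝕜 hT hne hδ
  obtain ⟨hcompact, hattains⟩ :=
    uniquelyQuasiAttainsNorm_comp_of_unique_norm_maximizer hT A huK huniq
  refine ⟨A ∘L T, hcompact, hattains, ?_⟩
  calc ‖A ∘L T - T‖ = ‖(A - 1) ∘L T‖ := by rw [ContinuousLinearMap.sub_comp]; rfl
    _ ≤ ‖A - 1‖ * ‖T‖ := ContinuousLinearMap.opNorm_comp_le _ _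
    _ ≤ δ * ‖T‖ := by gcongr
    _ < ε := by rwa [mul_comm]

/-- compact operators which uniquely quasi attain their norm are dense (in operator
norm) in the space of compact operators. -/
theorem compact_uniquely_quasi_attaining_dense
    {𝕜 X Y : Type*} [RCLike 𝕜]
    [NormedAddCommGroup X] [NormedSpace 𝕜 X] [CompleteSpace X]
    [NormedAddCommGroup Y] [NormedSpace 𝕜 Y] [CompleteSpace Y]
    (T : X →L[𝕜] Y) (hT : IsCompact (closure (⇑T '' Metric.closedBall 0 1)))
    (ε : ℝ) (hε : 0 < ε) :
    ∃ S : X →L[𝕜] Y, IsCompact (closure (⇑S '' Metric.closedBall 0 1)) ∧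
      UniquelyQuasiAttainsNorm S ∧ ‖S - T‖ < ε :=
  compact_uniquely_quasi_attaining_dense_general T hT ε hε
end

section
/- Let X and Y be Banach spaces over 𝕂 (= ℝ or ℂ). Then the set of weakly compact bounded linear operators from X to Y which uniquely quasi attain their norm is dense, in the operator norm, in the space W(X,Y) of all weakly compact operators from X to Y. -/
open Filter

variable {𝕜 X Y : Type*} [RCLike 𝕜]
  [NormedAddCommGroup X] [NormedSpace 𝕜 X]
  [NormedAddCommGroup Y] [NormedSpace 𝕜 Y]

/-- `T` is weakly compact: the norm closure of `T '' B_X` is compact in the weak topology. -/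
def IsWeaklyCompactOperator (T : X →L[𝕜] Y) : Prop :=
  IsCompact (⇑(toWeakSpace 𝕜 Y) '' closure (⇑T '' Metric.closedBall 0 1))

/-!
A weakly compact set carries no infinite binary tree of nested nonempty subsets in which the two
children of every node are `ε`-separated by a functional of norm at most one.

If, for every `z` in some open set of functionals, the almost maximizers of `f + Re z` over a weakly
compact set `K` failed to lie within `ε` of each other, such a tree would exist: pick a functional
`g` telling apart two of these almost maximizers; replacing `z` by `z + r • g` and by `z - r • g`
moves the almost maximizers to opposite sides of `g`. Hence the good functionals form a dense open
set for each `ε`, and by Baire's theorem `f + Re z` has a strong maximum on `K` for a dense set of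
`z`.

For `K` the closure of the image of the unit ball under `T` and `f` the norm, let `u` be a strong
maximum of `‖y‖ + Re (z y)` with `z` small. As `K` is balanced, `y ↦ ‖y + z y • u / ‖u‖‖` is also
maximal at `u`, and its maximizing sequences converge to `u` up to unimodular scalars. So the small
perturbation `x ↦ T x + z (T x) • u / ‖u‖` of `T` uniquely quasi attains its norm.
-/

open Metric PiNat Set TopologicalSpace

section WeakTopology

theorem continuous_dual_toWeakSpace_symm (g : StrongDual 𝕜 Y) :
    Continuous fun w : WeakSpace 𝕜 Y => g ((toWeakSpace 𝕜 Y).symm w) :=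
  WeakBilin.eval_continuous _ g

theorem mem_of_toWeakSpace_mem_closure [NormedSpace ℝ Y] [IsScalarTower ℝ 𝕜 Y] {C : Set Y}
    (hC : Convex ℝ C) (hCc : IsClosed C) {y : Y}
    (hy : toWeakSpace 𝕜 Y y ∈ closure (toWeakSpace 𝕜 Y '' C)) : y ∈ C := by
  rwa [← hC.toWeakSpace_closure 𝕜, hCc.closure_eq, (toWeakSpace 𝕜 Y).injective.mem_set_image] at hy

theorem mem_submodule_of_toWeakSpace_mem_closure {V : Submodule 𝕜 Y} (hV : IsClosed (V : Set Y))
    {y : Y} (hy : toWeakSpace 𝕜 Y y ∈ closure (toWeakSpace 𝕜 Y '' V)) : y ∈ V := by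
  let _ : NormedSpace ℝ Y := .restrictScalars ℝ 𝕜 Y
  have : IsScalarTower ℝ 𝕜 Y := .restrictScalars ℝ 𝕜 Y
  exact mem_of_toWeakSpace_mem_closure (V.restrictScalars ℝ).convex hV hy

theorem mem_closedBall_of_toWeakSpace_mem_closure {x y : Y} {r : ℝ}
    (hy : toWeakSpace 𝕜 Y y ∈ closure (toWeakSpace 𝕜 Y '' closedBall x r)) :
    y ∈ closedBall x r := by
  let _ : NormedSpace ℝ Y := .restrictScalars ℝ 𝕜 Y
  have : IsScalarTower ℝ 𝕜 Y := .restrictScalars ℝ 𝕜 Y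
  exact mem_of_toWeakSpace_mem_closure (convex_closedBall x r) isClosed_closedBall hy

theorem exists_toWeakSpace_mem_closure_of_eventually_mem {K : Set Y}
    (hK : IsCompact (toWeakSpace 𝕜 Y '' K)) {ι : Type*} {l : Filter ι} [l.NeBot] {y : ι → Y}
    (hy : ∀ i, y i ∈ K) :
    ∃ u ∈ K, ∀ A : Set Y, (∀ᶠ i in l, y i ∈ A) →
      toWeakSpace 𝕜 Y u ∈ closure (toWeakSpace 𝕜 Y '' A) := by
  obtain ⟨_, ⟨u, hu, rfl⟩, hcluster⟩ := hK.exists_mapClusterPt (f := l)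
    (u := fun i => toWeakSpace 𝕜 Y (y i))
    (tendsto_principal.2 <| .of_forall fun i => ⟨_, hy i, rfl⟩)
  exact ⟨u, hu, fun A hA => isClosed_closure.mem_of_mapClusterPt hcluster <|
    hA.mono fun i hi => subset_closure ⟨_, hi, rfl⟩⟩

theorem isBounded_of_isCompact_toWeakSpace_image {K : Set Y}
    (hK : IsCompact (toWeakSpace 𝕜 Y '' K)) : Bornology.IsBounded K := by
  have hpointwise (g : StrongDual 𝕜 Y) : ∃ C, ∀ y : K, ‖g y‖ ≤ C := by
    obtain ⟨C, hC⟩ :=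
      hK.exists_bound_of_continuousOn (continuous_dual_toWeakSpace_symm g).continuousOn
    exact ⟨C, fun y => hC _ ⟨y, y.2, rfl⟩⟩
  obtain ⟨C, hC⟩ := banach_steinhaus
    (g := fun y : K => NormedSpace.inclusionInDoubleDual 𝕜 Y y) hpointwise
  refine isBounded_iff_forall_norm_le.2 ⟨C, fun y hy => ?_⟩
  rw [← (NormedSpace.inclusionInDoubleDualLi 𝕜 (E := Y)).norm_map y]
  exact hC ⟨y, hy⟩

end WeakTopology

section Trees

theorem countable_of_forall_ne_le_dist {ι E : Type*} [PseudoMetricSpace E] {s : Set E}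
    (hs : IsSeparable s) {x : ι → E} (hx : ∀ i, x i ∈ s) {ε : ℝ} (hε : 0 < ε)
    (hsep : ∀ i j, i ≠ j → ε ≤ dist (x i) (x j)) : Countable ι := by
  obtain ⟨c, hc, hsc⟩ := hs
  have := hc.to_subtype
  have hnear (i : ι) : ∃ a : c, dist (x i) a < ε / 2 := by
    obtain ⟨a, ha, hxa⟩ := mem_closure_iff.1 (hsc (hx i)) (ε / 2) (half_pos hε)
    exact ⟨⟨a, ha⟩, hxa⟩
  choose a ha using hnear
  refine Function.Injective.countable (f := a) fun i j hij => ?_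
  by_contra hne
  have hdist : dist (x i) (x j) < ε := by
    linarith [dist_triangle_right (x i) (x j) (a i), ha i, hij ▸ ha j]
  exact (hsep i j hne).not_gt hdist

variable (𝕜) in
/-- Two sets are `ε`-separated by a functional of the unit ball of the dual. Unlike a uniform
distance between the sets, this passes to weak closures. -/
def DualSeparated (ε : ℝ) (A B : Set Y) : Prop :=
  ∃ g : StrongDual 𝕜 Y, ‖g‖ ≤ 1 ∧ ∀ a ∈ A, ∀ b ∈ B, ε ≤ dist (g a) (g b)

theorem DualSeparated.symm {ε : ℝ} {A B : Set Y} (h : DualSeparated 𝕜 ε A B) :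
    DualSeparated 𝕜 ε B A :=
  let ⟨g, hg, hAB⟩ := h
  ⟨g, hg, fun b hb a ha => dist_comm (g a) (g b) ▸ hAB a ha b hb⟩

theorem DualSeparated.le_dist {ε : ℝ} {A B : Set Y} (h : DualSeparated 𝕜 ε A B) {x y : Y}
    (hx : toWeakSpace 𝕜 Y x ∈ closure (toWeakSpace 𝕜 Y '' A))
    (hy : toWeakSpace 𝕜 Y y ∈ closure (toWeakSpace 𝕜 Y '' B)) : ε ≤ dist x y := by
  obtain ⟨g, hg, hAB⟩ := h
  have hgw := continuous_dual_toWeakSpace_symm g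
  have hgxy : dist (g x) (g y) ∈ closure (Ici ε) :=
    map_mem_closure₂ (f := fun v w : WeakSpace 𝕜 Y =>
        dist (g ((toWeakSpace 𝕜 Y).symm v)) (g ((toWeakSpace 𝕜 Y).symm w)))
      ((hgw.comp continuous_fst).dist (hgw.comp continuous_snd)) hx hy <| by
      rintro _ ⟨a, ha, rfl⟩ _ ⟨b, hb, rfl⟩
      exact hAB a ha b hb
  calc ε ≤ dist (g x) (g y) := isClosed_Ici.closure_subset hgxy
    _ ≤ 1 * dist x y := by simpa only [dist_eq_norm, ← map_sub] using g.le_of_opNorm_le hg (x - y)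
    _ = dist x y := one_mul _

theorem exists_mem_closure_span_branch {K : Set Y} (hK : IsCompact (toWeakSpace 𝕜 Y '' K))
    {A : List Bool → Set Y} (hA : CantorScheme.Antitone A) (hAK : A [] ⊆ K) {y : List Bool → Y}
    (hy : ∀ l, y l ∈ A l) (σ : ℕ → Bool) :
    ∃ x ∈ (Submodule.span 𝕜 (range y)).topologicalClosure, ∀ n,
      toWeakSpace 𝕜 Y x ∈ closure (toWeakSpace 𝕜 Y '' A (res σ n)) := by
  have hanti : Antitone fun n => A (res σ n) := antitone_nat_of_succ_le fun n => hA _ _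
  obtain ⟨x, -, hx⟩ := exists_toWeakSpace_mem_closure_of_eventually_mem (l := atTop)
    (y := fun n => y (res σ n)) hK fun n => hAK (hanti n.zero_le (hy _))
  refine ⟨x, mem_submodule_of_toWeakSpace_mem_closure (Submodule.isClosed_topologicalClosure _) <|
    hx _ <| .of_forall fun n => ?_, fun n => hx _ ?_⟩
  · exact Submodule.le_topologicalClosure _ (Submodule.subset_span ⟨_, rfl⟩)
  · filter_upwards [eventually_ge_atTop n] with m hm using hanti hm (hy _)

/-- Selecting a point at each node gives a separable closed span, which contains a weak limit along
each of the uncountably many branches; distinct branches have `ε`-separated limits. -/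
theorem exists_not_dualSeparated_children {K : Set Y} (hK : IsCompact (toWeakSpace 𝕜 Y '' K))
    {A : List Bool → Set Y} (hA : CantorScheme.Antitone A) (hAK : A [] ⊆ K)
    (hne : ∀ l, (A l).Nonempty) {ε : ℝ} (hε : 0 < ε) :
    ∃ l, ¬ DualSeparated 𝕜 ε (A (true :: l)) (A (false :: l)) := by
  by_contra! hsplit
  choose y hy using hne
  choose x hxV hx using exists_mem_closure_span_branch hK hA hAK hy
  have hchildren (l : List Bool) {b c : Bool} (hbc : b ≠ c) :
      DualSeparated 𝕜 ε (A (b :: l)) (A (c :: l)) := by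
    cases b <;> cases c
    · exact absurd rfl hbc
    · exact (hsplit l).symm
    · exact hsplit l
    · exact absurd rfl hbc
  have hdist (σ τ : ℕ → Bool) (hστ : σ ≠ τ) : ε ≤ dist (x σ) (x τ) := by
    have hres : res σ (firstDiff σ τ) = res τ (firstDiff σ τ) :=
      res_eq_res.2 fun _ => apply_eq_of_lt_firstDiff
    have hσ := hx σ (firstDiff σ τ + 1)
    have hτ := hx τ (firstDiff σ τ + 1)
    rw [res_succ] at hσ hτ
    exact (hchildren _ (apply_firstDiff_ne hστ)).le_dist hσ (hres ▸ hτ)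
  have hV : IsSeparable ((Submodule.span 𝕜 (range y)).topologicalClosure : Set Y) :=
    ((countable_range y).isSeparable.span (R := 𝕜)).closure
  have huncountable : Uncountable (ℕ → Bool) :=
    Cardinal.aleph0_lt_mk_iff.1 (by simpa using Cardinal.cantor Cardinal.aleph0)
  exact not_countable (countable_of_forall_ne_le_dist hV hxV hε hdist)

theorem exists_forall_not_dualSeparated {K : Set Y} (hK : IsCompact (toWeakSpace 𝕜 Y '' K))
    {ι : Type*} [Nonempty ι] {S : ι → Set Y} (hSK : ∀ i, S i ⊆ K) (hne : ∀ i, (S i).Nonempty)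
    {ε : ℝ} (hε : 0 < ε) :
    ∃ i, ∀ j k, S j ⊆ S i → S k ⊆ S i → ¬ DualSeparated 𝕜 ε (S j) (S k) := by
  by_contra! hsplit
  choose left right hleft hright hsep using hsplit
  let node : List Bool → ι :=
    List.foldr (fun b i => if b then left i else right i) (Classical.arbitrary ι)
  have hanti : CantorScheme.Antitone (S ∘ node) := by
    rintro l (_ | _)
    exacts [hright (node l), hleft (node l)]
  obtain ⟨l, hl⟩ := exists_not_dualSeparated_children hK hanti (hSK _) (fun _ => hne _) hε
  exact hl (hsep (node l))

end Trees

section VariationalPrinciple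

/-- The points of `K` at which `φ` is within `δ` of its supremum over `K`. -/
def almostMaximizers {α : Type*} (φ : α → ℝ) (K : Set α) (δ : ℝ) : Set α :=
  {y ∈ K | ∀ w ∈ K, φ w ≤ φ y + δ}

/-- For small enough `δ`, the `δ`-almost maximizers of `φ` over `K` lie within `ε` of each other. -/
def AlmostMaximizersWithin {α : Type*} [PseudoMetricSpace α] (φ : α → ℝ) (K : Set α) (ε : ℝ) :
    Prop :=
  ∃ δ > 0, ∀ y₁ ∈ almostMaximizers φ K δ, ∀ y₂ ∈ almostMaximizers φ K δ, dist y₁ y₂ ≤ ε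

/-- `u` is a strong maximum of `φ` on `K`: every maximizing sequence in `K` converges to `u`. -/
structure IsStrongMaxOn {α : Type*} [TopologicalSpace α] (φ : α → ℝ) (K : Set α) (u : α) :
    Prop where
  mem : u ∈ K
  isMaxOn : IsMaxOn φ K u
  tendsto : ∀ y : ℕ → α, (∀ n, y n ∈ K) → Tendsto (fun n => φ (y n)) atTop (nhds (φ u)) →
    Tendsto y atTop (nhds u)

/-- The perturbation of `f` by the real part of a continuous linear functional. -/
def tilt (f : Y → ℝ) (z : StrongDual 𝕜 Y) (y : Y) : ℝ :=
  f y + RCLike.re (z y)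

theorem almostMaximizers_nonempty {α : Type*} {φ : α → ℝ} {K : Set α} (hne : K.Nonempty)
    (hφ : BddAbove (φ '' K)) {δ : ℝ} (hδ : 0 < δ) : (almostMaximizers φ K δ).Nonempty := by
  obtain ⟨_, ⟨y, hy, rfl⟩, hlt⟩ := exists_lt_of_lt_csSup (hne.image φ) (sub_lt_self _ hδ)
  exact ⟨y, hy, fun w hw => by linarith [le_csSup hφ (mem_image_of_mem φ hw)]⟩

theorem almostMaximizers_mono {α : Type*} {φ : α → ℝ} {K : Set α} {δ δ' : ℝ} (h : δ ≤ δ') :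
    almostMaximizers φ K δ ⊆ almostMaximizers φ K δ' :=
  fun _ hy => ⟨hy.1, fun w hw => (hy.2 w hw).trans (by gcongr)⟩

theorem exists_isStrongMaxOn {K : Set Y} (hK : IsCompact (toWeakSpace 𝕜 Y '' K)) (hne : K.Nonempty)
    {φ : Y → ℝ} (hφ : Continuous φ) (hφK : BddAbove (φ '' K))
    (hsmall : ∀ ε > 0, AlmostMaximizersWithin φ K ε) :
    ∃ u, IsStrongMaxOn φ K u := by
  choose y hy using fun n : ℕ =>
    almostMaximizers_nonempty hne hφK (Nat.one_div_pos_of_nat (α := ℝ) (n := n))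
  have hy_mem {δ : ℝ} (hδ : 0 < δ) : ∀ᶠ n in atTop, y n ∈ almostMaximizers φ K δ := by
    filter_upwards [tendsto_one_div_add_atTop_nhds_zero_nat.eventually_le_const hδ] with n hn
      using almostMaximizers_mono hn (hy n)
  obtain ⟨u, huK, hu⟩ := exists_toWeakSpace_mem_closure_of_eventually_mem (l := atTop) hK
    fun n => (hy n).1
  have hdist_u (ε : ℝ) (hε : 0 < ε) : ∃ δ > 0, ∀ w ∈ almostMaximizers φ K δ, dist w u ≤ ε := by
    obtain ⟨δ, hδ, hdiam⟩ := hsmall ε hε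
    refine ⟨δ, hδ, fun w hw => mem_closedBall'.1 ?_⟩
    exact mem_closedBall_of_toWeakSpace_mem_closure <|
      hu _ ((hy_mem hδ).mono fun n hn => hdiam _ hn _ hw)
  have htendsto {w : ℕ → Y} (hw : ∀ δ > 0, ∀ᶠ n in atTop, w n ∈ almostMaximizers φ K δ) :
      Tendsto w atTop (nhds u) := by
    refine Metric.nhds_basis_closedBall.tendsto_right_iff.2 fun ε hε => ?_
    obtain ⟨δ, hδ, hδu⟩ := hdist_u ε hε
    exact (hw δ hδ).mono fun n => hδu _
  have hmax : IsMaxOn φ K u := fun w hw => by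
    have hlim : Tendsto (fun n => φ (y n) + 1 / ((n : ℝ) + 1)) atTop (nhds (φ u + 0)) :=
      ((hφ.tendsto u).comp (htendsto fun _ => hy_mem)).add tendsto_one_div_add_atTop_nhds_zero_nat
    rw [add_zero] at hlim
    exact ge_of_tendsto' hlim fun n => (hy n).2 w hw
  refine ⟨u, huK, hmax, fun w hwK hw => htendsto fun δ hδ => ?_⟩
  filter_upwards [hw.eventually_const_le (sub_lt_self _ hδ)] with n hn
  exact ⟨hwK n, fun v hv => (hmax hv).trans (sub_le_iff_le_add.1 hn)⟩

variable {K : Set Y} {f : Y → ℝ} {z z' : StrongDual 𝕜 Y} {R : ℝ}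

theorem continuous_tilt (hf : Continuous f) (z : StrongDual 𝕜 Y) : Continuous (tilt f z) :=
  hf.add (RCLike.continuous_re.comp z.continuous)

theorem tilt_le_tilt_add (hR : ∀ y ∈ K, ‖y‖ ≤ R) {y : Y} (hy : y ∈ K) :
    tilt f z y ≤ tilt f z' y + R * dist z z' := by
  have hre : RCLike.re ((z - z') y) ≤ R * dist z z' := by
    calc RCLike.re ((z - z') y) ≤ ‖(z - z') y‖ := RCLike.re_le_norm _
      _ ≤ dist z z' * ‖y‖ := dist_eq_norm z z' ▸ (z - z').le_opNorm y
      _ ≤ R * dist z z' := by rw [mul_comm]; gcongr; exact hR y hy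
  rw [sub_apply, map_sub] at hre
  unfold tilt
  linarith

theorem bddAbove_tilt_image (hR : ∀ y ∈ K, ‖y‖ ≤ R) (hf : BddAbove (f '' K))
    (z : StrongDual 𝕜 Y) : BddAbove (tilt f z '' K) := by
  obtain ⟨C, hC⟩ := hf
  refine ⟨C + R * dist z 0, ?_⟩
  rintro _ ⟨y, hy, rfl⟩
  calc tilt f z y ≤ tilt f (0 : StrongDual 𝕜 Y) y + R * dist z 0 := tilt_le_tilt_add hR hy
    _ = f y + R * dist z 0 := by simp [tilt]
    _ ≤ C + R * dist z 0 := by gcongr; exact hC ⟨y, hy, rfl⟩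

theorem almostMaximizers_tilt_subset (hR : ∀ y ∈ K, ‖y‖ ≤ R) {δ δ' : ℝ}
    (h : δ' + 2 * (R * dist z z') ≤ δ) :
    almostMaximizers (tilt f z') K δ' ⊆ almostMaximizers (tilt f z) K δ := by
  rintro y ⟨hyK, hy⟩
  refine ⟨hyK, fun w hw => ?_⟩
  have hw' := tilt_le_tilt_add (f := f) (z := z) (z' := z') hR hw
  have hy' := tilt_le_tilt_add (f := f) (z := z') (z' := z) hR hyK
  rw [dist_comm] at hy'
  linarith [hy w hw]

theorem re_le_re_add_of_mem_almostMaximizers_tilt {g : StrongDual 𝕜 Y} {r η : ℝ} (hr : 0 < r)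
    {y₁ y : Y} (hy₁ : y₁ ∈ almostMaximizers (tilt f z) K η)
    (hy : y ∈ almostMaximizers (tilt f (z + (r : 𝕜) • g)) K η) :
    RCLike.re (g y₁) ≤ RCLike.re (g y) + 2 * η / r := by
  have h₁ := hy₁.2 y hy.1
  have h₂ := hy.2 y₁ hy₁.1
  simp only [tilt, add_apply, smul_apply, smul_eq_mul, map_add, RCLike.re_ofReal_mul] at h₁ h₂
  rw [← sub_le_iff_le_add', le_div_iff₀ hr]
  linarith

theorem dualSeparated_almostMaximizers_tilt {g : StrongDual 𝕜 Y} (hg : ‖g‖ ≤ 1) {r η ε : ℝ}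
    (hr : 0 < r) {y₁ y₂ : Y} (hy₁ : y₁ ∈ almostMaximizers (tilt f z) K η)
    (hy₂ : y₂ ∈ almostMaximizers (tilt f z) K η)
    (hgap : ε + 4 * η / r ≤ RCLike.re (g y₁) - RCLike.re (g y₂)) :
    DualSeparated 𝕜 ε (almostMaximizers (tilt f (z + (r : 𝕜) • g)) K η)
      (almostMaximizers (tilt f (z + (r : 𝕜) • -g)) K η) := by
  refine ⟨g, hg, fun a ha b hb => ?_⟩
  have ha' := re_le_re_add_of_mem_almostMaximizers_tilt hr hy₁ ha
  have hb' := re_le_re_add_of_mem_almostMaximizers_tilt hr hy₂ hb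
  simp only [neg_apply, map_neg] at hb'
  have hsplit : 4 * η / r = 2 * η / r + 2 * η / r := by ring
  calc ε ≤ RCLike.re (g a) - RCLike.re (g b) := by linarith
    _ = RCLike.re (g a - g b) := (map_sub _ _ _).symm
    _ ≤ dist (g a) (g b) := dist_eq_norm (g a) (g b) ▸ RCLike.re_le_norm _

theorem eventually_almostMaximizers_tilt_subset (hR : ∀ y ∈ K, ‖y‖ ≤ R) {δ : ℝ} (hδ : 0 < δ) :
    ∀ᶠ z' in nhds z, almostMaximizers (tilt f z') K (δ / 2) ⊆ almostMaximizers (tilt f z) K δ := by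
  have hcont : Continuous fun z' => 2 * (R * dist z z') := by fun_prop
  have hlim := hcont.tendsto z
  rw [dist_self, mul_zero, mul_zero] at hlim
  filter_upwards [hlim.eventually_le_const (half_pos hδ)] with z' hz'
  exact almostMaximizers_tilt_subset hR (by linarith)

theorem exists_dualSeparated_tilts (hR : ∀ y ∈ K, ‖y‖ ≤ R) {G : Set (StrongDual 𝕜 Y)}
    (hG : G ∈ nhds z) {δ ε : ℝ} (hδ : 0 < δ) (hε : 0 < ε)
    (hlarge : ¬ AlmostMaximizersWithin (tilt f z) K ε) :
    ∃ z₁ ∈ G, ∃ z₂ ∈ G, ∃ η > 0,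
      almostMaximizers (tilt f z₁) K η ⊆ almostMaximizers (tilt f z) K δ ∧
      almostMaximizers (tilt f z₂) K η ⊆ almostMaximizers (tilt f z) K δ ∧
      DualSeparated 𝕜 (ε / 2) (almostMaximizers (tilt f z₁) K η)
        (almostMaximizers (tilt f z₂) K η) := by
  obtain ⟨r, hr, hball⟩ := nhds_basis_closedBall.eventually_iff.1 <|
    (eventually_almostMaximizers_tilt_subset (f := f) hR hδ).and hG
  have htilt {h : StrongDual 𝕜 Y} (hh : ‖h‖ ≤ 1) : z + (r : 𝕜) • h ∈ closedBall z r := by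
    rw [mem_closedBall, dist_self_add_left, norm_smul, RCLike.norm_ofReal, abs_of_pos hr]
    exact mul_le_of_le_one_right hr.le hh
  let η := min (δ / 2) (r * ε / 8)
  have hη : 0 < η := by positivity
  unfold AlmostMaximizersWithin at hlarge
  push Not at hlarge
  obtain ⟨y₁, hy₁, y₂, hy₂, hy⟩ := hlarge η hη
  obtain ⟨g, hg, hgy⟩ := exists_dual_vector'' 𝕜 (y₁ - y₂)
  have hgap : ε / 2 + 4 * η / r ≤ RCLike.re (g y₁) - RCLike.re (g y₂) := by
    have hηr : 4 * η / r ≤ ε / 2 := by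
      rw [div_le_iff₀ hr]
      linarith [min_le_right (δ / 2) (r * ε / 8)]
    rw [← map_sub, ← map_sub, hgy, RCLike.ofReal_re, ← dist_eq_norm]
    linarith
  have hg' : ‖-g‖ ≤ 1 := by rwa [norm_neg]
  have hmono (w : StrongDual 𝕜 Y) := almostMaximizers_mono (φ := tilt f w) (K := K)
    (min_le_left (δ / 2) (r * ε / 8))
  exact ⟨_, (hball (htilt hg)).2, _, (hball (htilt hg')).2, η, hη,
    (hmono _).trans (hball (htilt hg)).1, (hmono _).trans (hball (htilt hg')).1,
    dualSeparated_almostMaximizers_tilt hg hr hy₁ hy₂ hgap⟩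

theorem dense_setOf_almostMaximizersWithin_tilt (hK : IsCompact (toWeakSpace 𝕜 Y '' K))
    (hne : K.Nonempty) (hf : BddAbove (f '' K)) {ε : ℝ} (hε : 0 < ε) :
    Dense {z : StrongDual 𝕜 Y | AlmostMaximizersWithin (tilt f z) K ε} := by
  obtain ⟨R, hR⟩ := isBounded_iff_forall_norm_le.1 (isBounded_of_isCompact_toWeakSpace_image hK)
  refine dense_iff_inter_open.2 fun G hG ⟨z₀, hz₀⟩ => ?_
  let ι := {p : StrongDual 𝕜 Y × ℝ // p.1 ∈ G ∧ 0 < p.2}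
  have : Nonempty ι := ⟨(z₀, 1), hz₀, one_pos⟩
  obtain ⟨⟨⟨z, δ⟩, hz, hδ⟩, hunsplit⟩ := exists_forall_not_dualSeparated hK
    (S := fun i : ι => almostMaximizers (tilt f i.1.1) K i.1.2) (fun _ => sep_subset _ _)
    (fun i => almostMaximizers_nonempty hne (bddAbove_tilt_image hR hf _) i.2.2) (half_pos hε)
  refine ⟨z, hz, ?_⟩
  by_contra hlarge
  obtain ⟨z₁, hz₁, z₂, hz₂, η, hη, hsub₁, hsub₂, hsep⟩ :=
    exists_dualSeparated_tilts hR (hG.mem_nhds hz) hδ hε hlarge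
  exact hunsplit ⟨(z₁, η), hz₁, hη⟩ ⟨(z₂, η), hz₂, hη⟩ hsub₁ hsub₂ hsep

theorem isOpen_setOf_almostMaximizersWithin_tilt (hR : ∀ y ∈ K, ‖y‖ ≤ R) (ε : ℝ) :
    IsOpen {z : StrongDual 𝕜 Y | AlmostMaximizersWithin (tilt f z) K ε} := by
  refine isOpen_iff_mem_nhds.2 fun z ⟨δ, hδ, hz⟩ => ?_
  filter_upwards [eventually_almostMaximizers_tilt_subset hR hδ] with z' hz'
  exact ⟨δ / 2, half_pos hδ, fun y₁ hy₁ y₂ hy₂ => hz y₁ (hz' hy₁) y₂ (hz' hy₂)⟩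

/-- **Stegall's variational principle** for weakly compact sets. -/
theorem dense_setOf_exists_isStrongMaxOn_tilt (hK : IsCompact (toWeakSpace 𝕜 Y '' K))
    (hne : K.Nonempty) (hf : Continuous f) (hfK : BddAbove (f '' K)) :
    Dense {z : StrongDual 𝕜 Y | ∃ u, IsStrongMaxOn (tilt f z) K u} := by
  obtain ⟨R, hR⟩ := isBounded_iff_forall_norm_le.1 (isBounded_of_isCompact_toWeakSpace_image hK)
  have hdense := dense_iInter_of_isOpen_nat
    (fun n : ℕ => isOpen_setOf_almostMaximizersWithin_tilt (𝕜 := 𝕜) (f := f) hR (1 / (n + 1)))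
    (fun n => dense_setOf_almostMaximizersWithin_tilt hK hne hfK Nat.one_div_pos_of_nat)
  refine hdense.mono fun z hz => exists_isStrongMaxOn hK hne (continuous_tilt hf z)
    (bddAbove_tilt_image hR hfK z) fun ε hε => ?_
  obtain ⟨n, hn⟩ := exists_nat_one_div_lt hε
  obtain ⟨δ, hδ, hδn⟩ := mem_iInter.1 hz n
  exact ⟨δ, hδ, fun y₁ hy₁ y₂ hy₂ => (hδn y₁ hy₁ y₂ hy₂).trans hn.le⟩

end VariationalPrinciple

section NormTilt

variable {K : Set Y} {z : StrongDual 𝕜 Y} {u : Y}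

theorem exists_tilt_norm_smul_eq (z : StrongDual 𝕜 Y) (y : Y) :
    ∃ θ : 𝕜, ‖θ‖ = 1 ∧ tilt norm z (θ • y) = ‖y‖ + ‖z y‖ := by
  obtain ⟨θ, hθ, h⟩ := RCLike.exists_norm_eq_mul_self (z y)
  refine ⟨θ, hθ, ?_⟩
  rw [tilt, norm_smul, hθ, one_mul, map_smul, smul_eq_mul, ← h, RCLike.ofReal_re]

theorem norm_add_norm_le_tilt_of_isMaxOn (hK : Balanced 𝕜 K) (hmax : IsMaxOn (tilt norm z) K u)
    {y : Y} (hy : y ∈ K) : ‖y‖ + ‖z y‖ ≤ tilt norm z u := by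
  obtain ⟨θ, hθ, h⟩ := exists_tilt_norm_smul_eq z y
  exact h ▸ hmax (hK.smul_mem hθ.le hy)

theorem apply_eq_norm_of_isMaxOn_tilt (hK : Balanced 𝕜 K) (hu : u ∈ K)
    (hmax : IsMaxOn (tilt norm z) K u) : z u = ‖z u‖ := by
  have h : ‖u‖ + ‖z u‖ ≤ ‖u‖ + RCLike.re (z u) := norm_add_norm_le_tilt_of_isMaxOn hK hmax hu
  exact RCLike.norm_le_re_iff_eq_norm.1 (le_of_add_le_add_left h)

/-- The rank-one perturbation `y ↦ y + z y • u / ‖u‖` of the identity (the identity itself if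
`u = 0`). It carries the functional `y ↦ ‖y‖ + ‖z y‖` over to the norm, with equality at `u`. -/
noncomputable def rankOnePerturbation (z : StrongDual 𝕜 Y) (u : Y) : Y →L[𝕜] Y :=
  .id 𝕜 Y + z.smulRight ((‖u‖⁻¹ : 𝕜) • u)

theorem norm_inv_norm_smul_le_one (u : Y) : ‖(‖u‖⁻¹ : 𝕜) • u‖ ≤ 1 := by
  rw [norm_smul, norm_inv, RCLike.norm_coe_norm]
  exact inv_mul_le_one

theorem norm_rankOnePerturbation_apply_le (z : StrongDual 𝕜 Y) (u y : Y) :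
    ‖rankOnePerturbation z u y‖ ≤ ‖y‖ + ‖z y‖ := by
  calc ‖y + z y • (‖u‖⁻¹ : 𝕜) • u‖ ≤ ‖y‖ + ‖z y • (‖u‖⁻¹ : 𝕜) • u‖ := norm_add_le _ _
    _ = ‖y‖ + ‖z y‖ * ‖(‖u‖⁻¹ : 𝕜) • u‖ := by rw [norm_smul (z y)]
    _ ≤ ‖y‖ + ‖z y‖ := by
      gcongr
      exact mul_le_of_le_one_right (norm_nonneg _) (norm_inv_norm_smul_le_one u)

theorem norm_rankOnePerturbation_apply_self (hz : z u = ‖z u‖) :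
    ‖rankOnePerturbation z u u‖ = ‖u‖ + ‖z u‖ := by
  rcases eq_or_ne u 0 with rfl | hu
  · simp
  have hcoeff : rankOnePerturbation z u u = ((1 + ‖z u‖ * ‖u‖⁻¹ : ℝ) : 𝕜) • u := by
    calc u + z u • (‖u‖⁻¹ : 𝕜) • u = (1 + ‖z u‖ * (‖u‖ : 𝕜)⁻¹ : 𝕜) • u := by
          rw [hz, smul_smul, add_smul, one_smul, RCLike.norm_coe_norm]
      _ = ((1 + ‖z u‖ * ‖u‖⁻¹ : ℝ) : 𝕜) • u := by push_cast; rfl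
  rw [hcoeff, norm_smul, RCLike.norm_of_nonneg (by positivity), add_mul, one_mul, mul_assoc,
    inv_mul_cancel₀ (norm_ne_zero_iff.2 hu), mul_one]

theorem norm_rankOnePerturbation_comp_sub_le (z : StrongDual 𝕜 Y) (u : Y) (T : X →L[𝕜] Y) :
    ‖rankOnePerturbation z u ∘L T - T‖ ≤ ‖z‖ * ‖T‖ := by
  calc ‖rankOnePerturbation z u ∘L T - T‖ = ‖z.smulRight ((‖u‖⁻¹ : 𝕜) • u) ∘L T‖ := by
        congr 1
        ext x
        exact add_sub_cancel_left _ _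
    _ ≤ ‖z.smulRight ((‖u‖⁻¹ : 𝕜) • u)‖ * ‖T‖ := ContinuousLinearMap.opNorm_comp_le _ _
    _ ≤ ‖z‖ * ‖T‖ := by
      rw [ContinuousLinearMap.norm_smulRight_apply]
      gcongr
      exact mul_le_of_le_one_right (norm_nonneg _) (norm_inv_norm_smul_le_one u)

theorem norm_rankOnePerturbation_apply_self_of_isMaxOn (hK : Balanced 𝕜 K) (hu : u ∈ K)
    (hmax : IsMaxOn (tilt norm z) K u) : ‖rankOnePerturbation z u u‖ = tilt norm z u := by
  have hz := apply_eq_norm_of_isMaxOn_tilt hK hu hmax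
  have hre : ‖z u‖ = RCLike.re (z u) :=
    (RCLike.norm_le_re_iff_eq_norm.2 hz).antisymm (RCLike.re_le_norm _)
  rw [norm_rankOnePerturbation_apply_self hz, tilt, hre]

theorem isMaxOn_norm_rankOnePerturbation (hK : Balanced 𝕜 K) (hu : u ∈ K)
    (hmax : IsMaxOn (tilt norm z) K u) : IsMaxOn (fun y => ‖rankOnePerturbation z u y‖) K u :=
  fun y hy => calc
    ‖rankOnePerturbation z u y‖ ≤ ‖y‖ + ‖z y‖ := norm_rankOnePerturbation_apply_le z u y
    _ ≤ tilt norm z u := norm_add_norm_le_tilt_of_isMaxOn hK hmax hy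
    _ = ‖rankOnePerturbation z u u‖ :=
      (norm_rankOnePerturbation_apply_self_of_isMaxOn hK hu hmax).symm

theorem IsStrongMaxOn.exists_smul_tendsto (hu : IsStrongMaxOn (tilt norm z) K u)
    (hK : Balanced 𝕜 K) {y : ℕ → Y} (hy : ∀ n, y n ∈ K)
    (hlim : Tendsto (fun n => ‖rankOnePerturbation z u (y n)‖) atTop
      (nhds ‖rankOnePerturbation z u u‖)) :
    ∃ θ : ℕ → 𝕜, (∀ n, ‖θ n‖ = 1) ∧ Tendsto (fun n => θ n • y n) atTop (nhds u) := by
  choose θ hθ hθy using fun n => exists_tilt_norm_smul_eq z (y n)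
  have hθK (n : ℕ) : θ n • y n ∈ K := hK.smul_mem (hθ n).le (hy n)
  rw [norm_rankOnePerturbation_apply_self_of_isMaxOn hK hu.mem hu.isMaxOn] at hlim
  refine ⟨θ, hθ, hu.tendsto _ hθK <| tendsto_of_tendsto_of_tendsto_of_le_of_le hlim
    tendsto_const_nhds (fun n => ?_) fun n => hu.isMaxOn (hθK n)⟩
  exact (norm_rankOnePerturbation_apply_le z u (y n)).trans (hθy n).ge

end NormTilt

section Operators

theorem IsWeaklyCompactOperator.clm_comp {T : X →L[𝕜] Y} (hT : IsWeaklyCompactOperator T)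
    {W : Type*} [NormedAddCommGroup W] [NormedSpace 𝕜 W] (A : Y →L[𝕜] W) :
    IsWeaklyCompactOperator (A ∘L T) := by
  let K := closure (T '' closedBall 0 1)
  have hAK : IsCompact (toWeakSpace 𝕜 W '' (A '' K)) := by
    have h := hT.image (WeakSpace.map A).continuous
    rw [image_image] at h ⊢
    exact h
  have hAK_closed : IsClosed (A '' K) := by
    rw [← preimage_image_eq (A '' K) (toWeakSpace 𝕜 W).injective]
    exact hAK.isClosed.preimage (toWeakSpaceCLM 𝕜 W).continuous
  have hclosure : closure ((A ∘L T) '' closedBall 0 1) = A '' K := by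
    rw [ContinuousLinearMap.coe_comp, image_comp]
    exact (closure_minimal (image_mono subset_closure) hAK_closed).antisymm
      (image_closure_subset_closure_image A.continuous)
  rw [IsWeaklyCompactOperator, hclosure]
  exact hAK

theorem balanced_closure_image_closedBall (T : X →L[𝕜] Y) :
    Balanced 𝕜 (closure (T '' closedBall 0 1)) := by
  refine Balanced.closure fun a ha => ?_
  rw [← image_smul_set]
  exact image_mono (balanced_closedBall_zero a ha)

theorem opNorm_comp_eq_of_isMaxOn {W : Type*} [NormedAddCommGroup W] [NormedSpace 𝕜 W]
    {T : X →L[𝕜] Y} {A : Y →L[𝕜] W} {u : Y} (hu : u ∈ closure (T '' closedBall 0 1))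
    (hmax : IsMaxOn (fun y => ‖A y‖) (closure (T '' closedBall 0 1)) u) :
    ‖A ∘L T‖ = ‖A u‖ := by
  refine le_antisymm (ContinuousLinearMap.opNorm_le_of_unit_norm (norm_nonneg _) fun x hx =>
    hmax (subset_closure ⟨x, mem_closedBall_zero_iff.2 hx.le, rfl⟩)) ?_
  have hsub : closure (T '' closedBall 0 1) ⊆ {y | ‖A y‖ ≤ ‖A ∘L T‖} := by
    refine closure_minimal ?_ (isClosed_le (by fun_prop) continuous_const)
    rintro _ ⟨x, hx, rfl⟩
    exact (A ∘L T).unit_le_opNorm x (mem_closedBall_zero_iff.1 hx)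
  exact hsub hu

theorem uniquelyQuasiAttainsNorm_of_forall_exists_smul_tendsto {S : X →L[𝕜] Y} {v : Y}
    (h : ∀ x : ℕ → X, (∀ n, x n ∈ closedBall (0 : X) 1) →
      Tendsto (fun n => ‖S (x n)‖) atTop (nhds ‖S‖) →
      ∃ θ : ℕ → 𝕜, (∀ n, ‖θ n‖ = 1) ∧ Tendsto (fun n => θ n • S (x n)) atTop (nhds v)) :
    UniquelyQuasiAttainsNorm S := by
  refine ⟨v, fun x hx hlim => ?_⟩
  obtain ⟨θ, hθ, hθv⟩ := h x hx hlim
  obtain ⟨θ₀, hθ₀, σ, hσ, hσθ⟩ := (isCompact_sphere (0 : 𝕜) 1).tendsto_subseq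
    fun n => mem_sphere_zero_iff_norm.2 (hθ n)
  rw [mem_sphere_zero_iff_norm] at hθ₀
  have ne_zero {a : 𝕜} (ha : ‖a‖ = 1) : a ≠ 0 := norm_ne_zero_iff.1 (ha ▸ one_ne_zero)
  refine ⟨σ, hσ, θ₀⁻¹, by rw [norm_inv, hθ₀, inv_one], ?_⟩
  refine ((hσθ.inv₀ (ne_zero hθ₀)).smul (hθv.comp hσ.tendsto_atTop)).congr fun n => ?_
  exact inv_smul_smul₀ (ne_zero (hθ (σ n))) _

theorem IsStrongMaxOn.uniquelyQuasiAttainsNorm_comp {T : X →L[𝕜] Y} {z : StrongDual 𝕜 Y} {u : Y}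
    (hu : IsStrongMaxOn (tilt norm z) (closure (T '' closedBall 0 1)) u) :
    UniquelyQuasiAttainsNorm (rankOnePerturbation z u ∘L T) := by
  have hK := balanced_closure_image_closedBall T
  refine uniquelyQuasiAttainsNorm_of_forall_exists_smul_tendsto
    (v := rankOnePerturbation z u u) fun x hx hlim => ?_
  rw [opNorm_comp_eq_of_isMaxOn hu.mem (isMaxOn_norm_rankOnePerturbation hK hu.mem hu.isMaxOn)]
    at hlim
  obtain ⟨θ, hθ, hθu⟩ :=
    hu.exists_smul_tendsto hK (fun n => subset_closure (mem_image_of_mem T (hx n))) hlim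
  refine ⟨θ, hθ, (((rankOnePerturbation z u).continuous.tendsto u).comp hθu).congr fun n => ?_⟩
  exact map_smul _ _ _

end Operators

theorem weakly_compact_uniquely_quasi_attaining_dense_general
    {𝕜 X Y : Type*} [RCLike 𝕜]
    [NormedAddCommGroup X] [NormedSpace 𝕜 X]
    [NormedAddCommGroup Y] [NormedSpace 𝕜 Y]
    (T : X →L[𝕜] Y) (hT : IsWeaklyCompactOperator T) (ε : ℝ) (hε : 0 < ε) :
    ∃ S : X →L[𝕜] Y, IsWeaklyCompactOperator S ∧ UniquelyQuasiAttainsNorm S ∧ ‖S - T‖ < ε := by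
  let K := closure (T '' closedBall 0 1)
  have hne : K.Nonempty := ((nonempty_closedBall.2 zero_le_one).image T).closure
  obtain ⟨R, hR⟩ := isBounded_iff_forall_norm_le.1 (isBounded_of_isCompact_toWeakSpace_image hT)
  obtain ⟨z, ⟨u, hu⟩, hz⟩ := (dense_setOf_exists_isStrongMaxOn_tilt hT hne continuous_norm
    ⟨R, forall_mem_image.2 hR⟩).exists_dist_lt 0 (ε := ε / (‖T‖ + 1)) (by positivity)
  refine ⟨rankOnePerturbation z u ∘L T, hT.clm_comp _, hu.uniquelyQuasiAttainsNorm_comp, ?_⟩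
  rw [dist_zero_left, lt_div_iff₀ (by positivity)] at hz
  calc ‖rankOnePerturbation z u ∘L T - T‖ ≤ ‖z‖ * ‖T‖ := norm_rankOnePerturbation_comp_sub_le z u T
    _ ≤ ‖z‖ * (‖T‖ + 1) := by gcongr; exact le_add_of_nonneg_right zero_le_one
    _ < ε := hz

/-- weakly compact operators which uniquely quasi attain their norm are dense (in
operator norm) in the space of weakly compact operators. -/
theorem weakly_compact_uniquely_quasi_attaining_dense
    {𝕜 X Y : Type*} [RCLike 𝕜]
    [NormedAddCommGroup X] [NormedSpace 𝕜 X] [CompleteSpace X]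
    [NormedAddCommGroup Y] [NormedSpace 𝕜 Y] [CompleteSpace Y]
    (T : X →L[𝕜] Y) (hT : IsWeaklyCompactOperator T) (ε : ℝ) (hε : 0 < ε) :
    ∃ S : X →L[𝕜] Y, IsWeaklyCompactOperator S ∧ UniquelyQuasiAttainsNorm S ∧ ‖S - T‖ < ε :=
  weakly_compact_uniquely_quasi_attaining_dense_general T hT ε hε
end

section
/- Let X be an infinite-dimensional Banach space over 𝕂 (= ℝ or ℂ). Then there exists a bounded linear operator T : X → c₀ which does not quasi attain its norm, i.e., the norm closure of T(B_X) contains no point of norm ‖T‖. -/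
open ZeroAtInfty

/-!
If `f` is a weak*-null sequence of norm-one functionals on `X`, the operator
`x ↦ (n / (n + 1) * f n x)ₙ` into `c₀` has norm one, but the `n`-th coordinate of any point in the
closure of the image of the ball is at most `n / (n + 1)`. Since an element of `c₀` attains its
supremum at some coordinate, such a point has norm less than one.

Such an `f` exists by the Josefson–Nissenzweig theorem. To prove it over `ℝ`, start from a
normalized basic sequence `z` in the dual and suppose that `z` is not weak*-null.
If successive convex combinations of `z` can be chosen pointwise convergent, then their differences
are weak*-null, and they stay away from zero because `z` is basic. Otherwise some
sequence of convex combinations oscillates by a fixed amount under every further averaging.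
Repeatedly averaging two terms that oscillate then builds dyadic trees whose Rademacher coefficients
satisfy Bessel's inequality at every point, and the weak* limits of those coefficients are
pointwise square summable, hence weak*-null.
-/

open Filter Topology Set
open scoped Pointwise

section ConvexTail

variable {E : Type*} [AddCommGroup E] [Module ℝ E]

/-- `h` is a sequence of successive convex combinations of `g`: each `h k` is a convex combination
of terms of `g` with index at least `k`. Unlike for block sequences, the combinations may
overlap. -/
def IsConvexTail (h g : ℕ → E) : Prop :=
  ∀ k, h k ∈ convexHull ℝ (g '' Ici k)

namespace IsConvexTail

theorem refl (g : ℕ → E) : IsConvexTail g g :=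
  fun _ => subset_convexHull ℝ _ (mem_image_of_mem g self_mem_Ici)

theorem trans {f h g : ℕ → E} (hf : IsConvexTail f h) (hg : IsConvexTail h g) :
    IsConvexTail f g := fun k => by
  refine convexHull_min ?_ (convex_convexHull ℝ _) (hf k)
  rintro _ ⟨i, hi, rfl⟩
  exact convexHull_mono (image_mono (Ici_subset_Ici.2 hi)) (hg i)

theorem comp (g : ℕ → E) {φ : ℕ → ℕ} (hφ : ∀ k, k ≤ φ k) : IsConvexTail (g ∘ φ) g :=
  fun k => subset_convexHull ℝ _ (mem_image_of_mem g (hφ k))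

theorem midpoint (g : ℕ → E) {p q : ℕ → ℕ} (hp : ∀ k, k ≤ p k) (hq : ∀ k, k ≤ q k) :
    IsConvexTail (fun k => midpoint ℝ (g (p k)) (g (q k))) g :=
  fun k => (convex_convexHull ℝ _).midpoint_mem (comp g hp k) (comp g hq k)

theorem mem_of_convex {h g : ℕ → E} (hg : IsConvexTail h g) {C : Set E} (hC : Convex ℝ C)
    (hgC : ∀ n, g n ∈ C) (n : ℕ) : h n ∈ C :=
  convexHull_min (image_subset_iff.2 fun i _ => hgC i) hC (hg n)

theorem mem_span {𝕜 : Type*} [RCLike 𝕜] [Module 𝕜 E] [IsScalarTower ℝ 𝕜 E] {h g : ℕ → E}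
    (hg : IsConvexTail h g) (k : ℕ) : h k ∈ Submodule.span 𝕜 (g '' Ici k) :=
  convexHull_min Submodule.subset_span
    ((Submodule.span 𝕜 (g '' Ici k)).restrictScalars ℝ).convex (hg k)

theorem exists_diagonal {g : ℕ → E} {P : ℕ → (ℕ → E) → Prop}
    (hP : ∀ j h, IsConvexTail h g → ∃ H, IsConvexTail H h ∧ P j H) :
    ∃ d, IsConvexTail d g ∧
      ∀ j, ∃ H, P j H ∧ ∀ᶠ k in atTop, d k ∈ convexHull ℝ (H '' Ici k) := by
  choose! F hF hPF using hP
  let G : ℕ → ℕ → E := fun j => Nat.rec g F j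
  have hGg : ∀ j, IsConvexTail (G j) g := fun j => by
    induction j with
    | zero => exact refl g
    | succ j ih => exact (hF j (G j) ih).trans ih
  have hG : ∀ i j, i ≤ j → IsConvexTail (G j) (G i) := fun i j hij => by
    induction j, hij using Nat.le_induction with
    | base => exact refl _
    | succ j _ ih => exact (hF j (G j) (hGg j)).trans ih
  refine ⟨fun k => G k k, fun k => hGg k k, fun j => ⟨G (j + 1), hPF j (G j) (hGg j), ?_⟩⟩
  filter_upwards [eventually_ge_atTop (j + 1)] with k hk using hG _ _ hk k

end IsConvexTail

theorem eventually_sub_le_of_mem_convexHull {u v : ℕ → E} (f : E →ₗ[ℝ] ℝ) {c : ℝ}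
    (huv : ∀ᶠ k in atTop, u k ∈ convexHull ℝ (v '' Ici k))
    (hv : ∀ᶠ n : ℕ × ℕ in atTop, f (v n.1) - f (v n.2) ≤ c) :
    ∀ᶠ n : ℕ × ℕ in atTop, f (u n.1) - f (u n.2) ≤ c := by
  obtain ⟨K, hK⟩ := eventually_atTop_prod_self'.1 hv
  have hu : ∀ᶠ k in atTop, u k ∈ convexHull ℝ (v '' Ici K) := by
    filter_upwards [huv, eventually_ge_atTop K] with k hk hKk
    exact convexHull_mono (image_mono (Ici_subset_Ici.2 hKk)) hk
  rw [← prod_atTop_atTop_eq]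
  filter_upwards [hu.prod_mk hu] with n hn
  have hsub : u n.1 - u n.2 ∈ convexHull ℝ (v '' Ici K - v '' Ici K) := by
    rw [convexHull_sub]
    exact sub_mem_sub hn.1 hn.2
  rw [← map_sub]
  refine convexHull_min ?_ (convex_halfSpace_le f.isLinear c) hsub
  rintro _ ⟨_, ⟨p, hp, rfl⟩, _, ⟨q, hq, rfl⟩, rfl⟩
  simpa only [mem_ofPred_eq, map_sub] using hK p hp q hq

theorem cauchySeq_of_eventually_sub_lt {u : ℕ → ℝ}
    (hu : ∀ ε > 0, ∀ᶠ n : ℕ × ℕ in atTop, u n.1 - u n.2 < ε) : CauchySeq u := by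
  refine Metric.cauchySeq_iff.2 fun ε hε => ?_
  obtain ⟨K, hK⟩ := eventually_atTop_prod_self'.1 (hu ε hε)
  exact ⟨K, fun p hp q hq => abs_sub_lt_iff.2 ⟨hK p hp q hq, hK q hq p hp⟩⟩

end ConvexTail

section Rademacher

/-- Let `H (m + 1) k` be the midpoint of `H m (p m k)` and `H m (q m k)`, so that `H m k` averages
`H 0` over the `2 ^ m` leaves of a dyadic tree. Then `rademacherCoeff H p q j m k` is the same
average with a sign attached to each leaf, according to the branch taken at level `j`. It is `0`
for `m ≤ j`. -/
noncomputable def rademacherCoeff {E : Type*} [AddCommGroup E] [Module ℝ E] (H : ℕ → ℕ → E)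
    (p q : ℕ → ℕ → ℕ) (j : ℕ) : ℕ → ℕ → E
  | 0, _ => 0
  | m + 1, k =>
    if j = m then (1 / 2 : ℝ) • (H m (p m k) - H m (q m k))
    else midpoint ℝ (rademacherCoeff H p q j m (p m k)) (rademacherCoeff H p q j m (q m k))

section Module

variable {E F : Type*} [AddCommGroup E] [Module ℝ E] [AddCommGroup F] [Module ℝ F]
  (H : ℕ → ℕ → E) (p q : ℕ → ℕ → ℕ)

theorem rademacherCoeff_succ_self (m k : ℕ) :
    rademacherCoeff H p q m (m + 1) k = (1 / 2 : ℝ) • (H m (p m k) - H m (q m k)) :=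
  if_pos rfl

theorem rademacherCoeff_succ_of_ne {j m : ℕ} (hjm : j ≠ m) (k : ℕ) :
    rademacherCoeff H p q j (m + 1) k =
      midpoint ℝ (rademacherCoeff H p q j m (p m k)) (rademacherCoeff H p q j m (q m k)) :=
  if_neg hjm

theorem map_rademacherCoeff (L : E →ₗ[ℝ] F) (j m k : ℕ) :
    L (rademacherCoeff H p q j m k) = rademacherCoeff (fun m k => L (H m k)) p q j m k := by
  induction m generalizing k with
  | zero => exact map_zero L
  | succ m ih =>
    rcases eq_or_ne j m with rfl | hjm
    · simp only [rademacherCoeff_succ_self, map_smul, map_sub]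
    · simp only [rademacherCoeff_succ_of_ne _ _ _ hjm, ← ih]
      exact L.toAffineMap.map_midpoint _ _

theorem rademacherCoeff_mem_of_convex {C : Set E} (hC : Convex ℝ C) {j : ℕ}
    (hj : ∀ k, (1 / 2 : ℝ) • (H j (p j k) - H j (q j k)) ∈ C) {m : ℕ} (hjm : j < m) (k : ℕ) :
    rademacherCoeff H p q j m k ∈ C := by
  induction m, hjm using Nat.le_induction generalizing k with
  | base => simpa only [rademacherCoeff_succ_self] using hj k
  | succ m hjm ih =>
    rw [rademacherCoeff_succ_of_ne _ _ _ (Nat.lt_of_succ_le hjm).ne]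
    exact hC.midpoint_mem (ih _) (ih _)

end Module

variable {F : Type*} [NormedAddCommGroup F] [InnerProductSpace ℝ F]

theorem norm_midpoint_sq_add_norm_half_sub_sq (a b : F) :
    ‖midpoint ℝ a b‖ ^ 2 + ‖(1 / 2 : ℝ) • (a - b)‖ ^ 2 = (‖a‖ ^ 2 + ‖b‖ ^ 2) / 2 := by
  have hpar := parallelogram_law_with_norm ℝ a b
  rw [midpoint_eq_smul_add, norm_smul, norm_smul]
  norm_num
  linarith

theorem norm_midpoint_sq_le (a b : F) : ‖midpoint ℝ a b‖ ^ 2 ≤ (‖a‖ ^ 2 + ‖b‖ ^ 2) / 2 :=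
  (le_add_of_nonneg_right (sq_nonneg _)).trans_eq (norm_midpoint_sq_add_norm_half_sub_sq a b)

/-- **Bessel's inequality** for the Rademacher coefficients of a dyadic tree. -/
theorem norm_sq_add_sum_rademacherCoeff_sq_le {H : ℕ → ℕ → F} {p q : ℕ → ℕ → ℕ} {c : ℝ}
    (hH : ∀ m k, H (m + 1) k = midpoint ℝ (H m (p m k)) (H m (q m k)))
    (h0 : ∀ k, ‖H 0 k‖ ^ 2 ≤ c) (m k : ℕ) :
    ‖H m k‖ ^ 2 + ∑ j ∈ Finset.range m, ‖rademacherCoeff H p q j m k‖ ^ 2 ≤ c := by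
  induction m generalizing k with
  | zero => simpa only [Finset.range_zero, Finset.sum_empty, add_zero] using h0 k
  | succ m ih =>
    have hold : ∑ j ∈ Finset.range m, ‖rademacherCoeff H p q j (m + 1) k‖ ^ 2 ≤
        (∑ j ∈ Finset.range m, ‖rademacherCoeff H p q j m (p m k)‖ ^ 2 +
          ∑ j ∈ Finset.range m, ‖rademacherCoeff H p q j m (q m k)‖ ^ 2) / 2 := by
      rw [← Finset.sum_add_distrib, Finset.sum_div]
      refine Finset.sum_le_sum fun j hj => ?_
      rw [rademacherCoeff_succ_of_ne _ _ _ (Finset.mem_range.1 hj).ne]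
      exact norm_midpoint_sq_le _ _
    have hnew : ‖H (m + 1) k‖ ^ 2 + ‖rademacherCoeff H p q m (m + 1) k‖ ^ 2 =
        (‖H m (p m k)‖ ^ 2 + ‖H m (q m k)‖ ^ 2) / 2 := by
      rw [hH, rademacherCoeff_succ_self]
      exact norm_midpoint_sq_add_norm_half_sub_sq _ _
    rw [Finset.sum_range_succ]
    linarith [ih (p m k), ih (q m k)]

end Rademacher

section BasicSequence

variable {𝕜 : Type*} [RCLike 𝕜]

/-- Grünblum's criterion with constant `r`: for `r > 0` and nonzero terms, `z` is a basic sequence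
whose initial projections have norm at most `r⁻¹`. -/
def SatisfiesGrunblum (𝕜 : Type*) [RCLike 𝕜] {E : Type*} [SeminormedAddCommGroup E] [Module 𝕜 E]
    (r : ℝ) (z : ℕ → E) : Prop :=
  ∀ N, ∀ d ∈ Submodule.span 𝕜 (z '' Iio N), ∀ e ∈ Submodule.span 𝕜 (z '' Ici N),
    r * ‖d‖ ≤ ‖d - e‖

theorem SatisfiesGrunblum.exists_forall_le_norm_sub {E : Type*} [SeminormedAddCommGroup E]
    [Module 𝕜 E] {r : ℝ} {z : ℕ → E} (hz : SatisfiesGrunblum 𝕜 r z) {d : E}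
    (hd : d ∈ Submodule.span 𝕜 (range z)) :
    ∃ N, ∀ e ∈ Submodule.span 𝕜 (z '' Ici N), r * ‖d‖ ≤ ‖d - e‖ := by
  have hdir : Directed (· ≤ ·) fun N => Submodule.span 𝕜 (z '' Iio N) :=
    Monotone.directed_le fun _ _ hab => Submodule.span_mono (image_mono (Iio_subset_Iio hab))
  rw [← image_univ, ← iUnion_Iio, image_iUnion, Submodule.span_iUnion,
    Submodule.mem_iSup_of_directed _ hdir] at hd
  obtain ⟨N, hN⟩ := hd
  exact ⟨N, hz N d hN⟩

theorem SatisfiesGrunblum.exists_le_norm_sub_of_isConvexTail {E : Type*} [NormedAddCommGroup E]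
    [NormedSpace 𝕜 E] [NormedSpace ℝ E] [IsScalarTower ℝ 𝕜 E] {r : ℝ} {z d : ℕ → E}
    (hz : SatisfiesGrunblum 𝕜 r z) (hd : IsConvexTail d z) (k : ℕ) :
    ∃ n ≥ k, r * ‖d k‖ ≤ ‖d k - d n‖ := by
  obtain ⟨N, hN⟩ := hz.exists_forall_le_norm_sub
    (Submodule.span_mono (image_subset_range z _) (hd.mem_span (𝕜 := 𝕜) k))
  exact ⟨max k N, le_max_left k N, hN _ (Submodule.span_mono
    (image_mono (Ici_subset_Ici.2 (le_max_right k N))) (hd.mem_span _))⟩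

theorem exists_finset_norming {E F : Type*} [NormedAddCommGroup E] [NormedSpace 𝕜 E]
    [NormedAddCommGroup F] [NormedSpace 𝕜 F] (W : Submodule 𝕜 (E →L[𝕜] F)) [FiniteDimensional 𝕜 W]
    {r : ℝ} (hr : r < 1) :
    ∃ t : Finset E, (∀ x ∈ t, ‖x‖ ≤ 1) ∧ ∀ f ∈ W, ∃ x ∈ t, r * ‖f‖ ≤ ‖f x‖ := by
  classical
  have : ProperSpace W := FiniteDimensional.proper 𝕜 W
  obtain ⟨t, ht⟩ := (isCompact_sphere (0 : W) 1).elim_finite_subcover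
    (fun x : Metric.closedBall (0 : E) 1 => {w : W | r < ‖(w : E →L[𝕜] F) x‖})
    (fun x => isOpen_lt continuous_const (by fun_prop)) fun w hw => by
      have hw1 : ‖(w : E →L[𝕜] F)‖ = 1 := mem_sphere_zero_iff_norm.1 hw
      obtain ⟨x, hx, hwx⟩ :=
        (w : E →L[𝕜] F).exists_lt_apply_of_lt_opNorm (hr.trans_eq hw1.symm)
      exact mem_iUnion.2 ⟨⟨x, mem_closedBall_zero_iff.2 hx.le⟩, hwx⟩
  refine ⟨insert 0 (t.image Subtype.val), ?_, fun f hf => ?_⟩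
  · simp only [Finset.forall_mem_insert, norm_zero, zero_le_one, Finset.forall_mem_image, true_and]
    exact fun x _ => mem_closedBall_zero_iff.1 x.2
  · rcases eq_or_ne f 0 with rfl | hf0
    · exact ⟨0, Finset.mem_insert_self _ _, by simp⟩
    have hunit : (⟨(‖f‖ : 𝕜)⁻¹ • f, W.smul_mem _ hf⟩ : W) ∈ Metric.sphere (0 : W) 1 :=
      mem_sphere_zero_iff_norm.2 (norm_smul_inv_norm hf0)
    obtain ⟨x, hxt, hx⟩ := mem_iUnion₂.1 (ht hunit)
    refine ⟨x, Finset.mem_insert_of_mem (Finset.mem_image_of_mem _ hxt), ?_⟩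
    have hx' : r < ‖f‖⁻¹ * ‖f x‖ := by simpa [norm_smul] using hx
    rw [inv_mul_eq_div, lt_div_iff₀ (norm_pos_iff.2 hf0)] at hx'
    exact hx'.le

variable {X : Type*} [NormedAddCommGroup X] [NormedSpace 𝕜 X]

theorem finiteDimensional_of_strongDual [FiniteDimensional 𝕜 (StrongDual 𝕜 X)] :
    FiniteDimensional 𝕜 X :=
  have hinj : Function.Injective (NormedSpace.inclusionInDoubleDual 𝕜 X).toLinearMap :=
    (NormedSpace.inclusionInDoubleDualLi 𝕜 (E := X)).injective
  .of_injective _ hinj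

theorem exists_strongDual_norm_eq_one_eq_zero_on_finset (hX : ¬ FiniteDimensional 𝕜 X)
    (s : Finset X) : ∃ z : StrongDual 𝕜 X, ‖z‖ = 1 ∧ ∀ x ∈ s, z x = 0 := by
  let restrict : StrongDual 𝕜 X →ₗ[𝕜] s → 𝕜 :=
    LinearMap.pi fun x => (ContinuousLinearMap.apply 𝕜 𝕜 (x : X)).toLinearMap
  obtain ⟨z, hz, hz0⟩ : ∃ z ∈ restrict.ker, z ≠ 0 := by
    refine Submodule.exists_mem_ne_zero_of_ne_bot fun hker => hX ?_
    have := FiniteDimensional.of_injective restrict (LinearMap.ker_eq_bot.1 hker)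
    exact finiteDimensional_of_strongDual
  refine ⟨(‖z‖ : 𝕜)⁻¹ • z, norm_smul_inv_norm hz0, fun x hx => ?_⟩
  have hzx : z x = 0 := congrFun (LinearMap.mem_ker.1 hz) ⟨x, hx⟩
  rw [smul_apply, hzx, smul_zero]

/-- **Mazur's construction** of a basic sequence, in a dual space: each new functional vanishes on
a finite set of points that norms the span of the previous ones. -/
theorem exists_satisfiesGrunblum_strongDual (hX : ¬ FiniteDimensional 𝕜 X) {r : ℝ} (hr : r < 1) :
    ∃ z : ℕ → StrongDual 𝕜 X, (∀ n, ‖z n‖ = 1) ∧ SatisfiesGrunblum 𝕜 r z := by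
  classical
  choose norming norming_le norming_spec using fun s : Finset (StrongDual 𝕜 X) =>
    exists_finset_norming (Submodule.span 𝕜 (s : Set (StrongDual 𝕜 X))) hr
  -- Pairs `(s, z)` of a finite set containing the previous functionals and the new functional `z`.
  obtain ⟨a, ha, haa⟩ := exists_seq_of_forall_finset_exists
    (fun a : Finset (StrongDual 𝕜 X) × StrongDual 𝕜 X =>
      ‖a.2‖ = 1 ∧ ∀ x ∈ norming a.1, a.2 x = 0)
    (fun a b => a.2 ∈ b.1 ∧ ∀ x ∈ norming a.1, b.2 x = 0) fun A _ => by
      obtain ⟨z, hz1, hz⟩ := exists_strongDual_norm_eq_one_eq_zero_on_finset hX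
        (norming (A.image Prod.snd) ∪ A.biUnion fun a => norming a.1)
      exact ⟨(A.image Prod.snd, z), ⟨hz1, fun x hx => hz x (Finset.mem_union_left _ hx)⟩,
        fun a haA => ⟨Finset.mem_image_of_mem _ haA, fun x hx =>
          hz x (Finset.mem_union_right _ (Finset.mem_biUnion.2 ⟨a, haA, hx⟩))⟩⟩
  refine ⟨fun n => (a n).2, fun n => (ha n).1, fun N d hd e he => ?_⟩
  obtain ⟨x, hx, hdx⟩ := norming_spec (a N).1 d <| by
    refine Submodule.span_mono ?_ hd
    rintro _ ⟨n, hn, rfl⟩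
    exact (haa n N hn).1
  have hex : e x = 0 := by
    refine (Submodule.span_le (p := (ContinuousLinearMap.apply 𝕜 𝕜 x).ker)).2 ?_ he
    rintro _ ⟨n, hn, rfl⟩
    rcases (mem_Ici.1 hn).eq_or_lt with rfl | hNn
    · exact (ha N).2 x hx
    · exact (haa N n hNn).2 x hx
  calc r * ‖d‖ ≤ ‖(d - e) x‖ := by rwa [sub_apply, hex, sub_zero]
    _ ≤ ‖d - e‖ := (d - e).unit_le_opNorm x (norming_le _ x hx)

end BasicSequence

section WeakStar

variable {𝕜 X : Type*} [RCLike 𝕜] [NormedAddCommGroup X] [NormedSpace 𝕜 X]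

theorem exists_tendsto_apply_of_eventually_norm_le {ι : Type*} (U : Ultrafilter ι)
    {g : ι → StrongDual 𝕜 X} {C : ℝ} (hg : ∀ᶠ i in (U : Filter ι), ‖g i‖ ≤ C) :
    ∃ f : StrongDual 𝕜 X, ∀ x, Tendsto (fun i => g i x) U (𝓝 (f x)) := by
  obtain ⟨f, -, hf⟩ := (WeakDual.isCompact_closedBall (𝕜 := 𝕜) (0 : StrongDual 𝕜 X) C
    ).ultrafilter_le_nhds (U.map fun i => StrongDual.toWeakDual (g i)) <| by
      rw [Ultrafilter.coe_map, le_principal_iff, mem_map]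
      filter_upwards [hg] with i hi
      exact mem_closedBall_zero_iff.2 hi
  exact ⟨WeakDual.toStrongDual f, fun x => ((WeakDual.eval_continuous x).tendsto f).comp hf⟩

theorem exists_weakStar_null_tendsto_of_sum_sq_le {D : ℕ → ℕ → StrongDual 𝕜 X}
    (hD : ∀ m x, ∑ j ∈ Finset.range m, ‖D j m x‖ ^ 2 ≤ ‖x‖ ^ 2) :
    ∃ f : ℕ → StrongDual 𝕜 X, (∀ x, Tendsto (fun j => f j x) atTop (𝓝 0)) ∧
      ∀ j x, Tendsto (fun m => D j m x) (hyperfilter ℕ) (𝓝 (f j x)) := by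
  have hnorm : ∀ j, ∀ᶠ m in (hyperfilter ℕ : Filter ℕ), ‖D j m‖ ≤ 1 := fun j => by
    filter_upwards [(eventually_gt_atTop j).filter_mono Nat.hyperfilter_le_atTop] with m hjm
    refine ContinuousLinearMap.opNorm_le_bound _ zero_le_one fun x => ?_
    have hsq : ‖D j m x‖ ^ 2 ≤ ‖x‖ ^ 2 :=
      (Finset.single_le_sum (f := fun j => ‖D j m x‖ ^ 2) (fun _ _ => sq_nonneg _)
        (Finset.mem_range.2 hjm)).trans (hD m x)
    simpa only [one_mul] using le_of_sq_le_sq hsq (norm_nonneg x)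
  choose f hf using fun j => exists_tendsto_apply_of_eventually_norm_le _ (hnorm j)
  refine ⟨f, fun x => ?_, hf⟩
  have hsummable : Summable fun j => ‖f j x‖ ^ 2 := by
    refine summable_of_sum_range_le (c := ‖x‖ ^ 2) (fun _ => sq_nonneg _) fun N => ?_
    refine le_of_tendsto (tendsto_finsetSum (Finset.range N) fun j _ => (hf j x).norm.pow 2) ?_
    filter_upwards [(eventually_ge_atTop N).filter_mono Nat.hyperfilter_le_atTop] with m hNm
    exact (Finset.sum_le_sum_of_subset_of_nonneg (Finset.range_mono hNm)
      fun _ _ _ => sq_nonneg _).trans (hD m x)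
  have hsqrt := hsummable.tendsto_atTop_zero.sqrt
  simp only [Real.sqrt_sq (norm_nonneg _), Real.sqrt_zero] at hsqrt
  exact tendsto_zero_iff_norm_tendsto_zero.2 hsqrt

end WeakStar

section JosefsonNissenzweig

section Real

variable {X : Type*} [NormedAddCommGroup X] [NormedSpace ℝ X]

/-- Every convex tail of `h` oscillates by more than `ε` at some point of norm one. The
condition is scaled so that it excludes the point `0` without normalizing `x`. -/
def HereditarilyOscillates (ε : ℝ) (h : ℕ → StrongDual ℝ X) : Prop :=
  ∀ H, IsConvexTail H h → ∃ x, ∃ᶠ n : ℕ × ℕ in atTop, ε * ‖x‖ < H n.1 x - H n.2 x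

namespace HereditarilyOscillates

variable {ε : ℝ} {h : ℕ → StrongDual ℝ X}

theorem exists_dyadic_tree (hosc : HereditarilyOscillates ε h) :
    ∃ (H : ℕ → ℕ → StrongDual ℝ X) (p q : ℕ → ℕ → ℕ) (x : ℕ → X), H 0 = h ∧
      (∀ m k, H (m + 1) k = midpoint ℝ (H m (p m k)) (H m (q m k))) ∧
      ∀ m k, ε * ‖x m‖ < H m (p m k) (x m) - H m (q m k) (x m) := by
  have hbranch : ∀ G : {G // IsConvexTail G h}, ∃ (p q : ℕ → ℕ) (x : X), (∀ k, k ≤ p k) ∧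
      (∀ k, k ≤ q k) ∧ ∀ k, ε * ‖x‖ < G.1 (p k) x - G.1 (q k) x := fun G => by
    obtain ⟨x, hx⟩ := hosc G.1 G.2
    choose n hn hxn using fun k => frequently_atTop.1 hx (k, k)
    exact ⟨fun k => (n k).1, fun k => (n k).2, x, fun k => (hn k).1, fun k => (hn k).2, hxn⟩
  choose p q x hp hq hx using hbranch
  let G : ℕ → {G // IsConvexTail G h} := fun m => Nat.rec ⟨h, IsConvexTail.refl h⟩
    (fun _ G => ⟨_, (IsConvexTail.midpoint G.1 (hp G) (hq G)).trans G.2⟩) m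
  exact ⟨fun m => (G m).1, fun m => p (G m), fun m => q (G m), fun m => x (G m), rfl,
    fun _ _ => rfl, fun m => hx (G m)⟩

theorem exists_weakStar_null_norm_ge (hosc : HereditarilyOscillates ε h) (hε : 0 < ε)
    (hh : ∀ k, ‖h k‖ ≤ 1) :
    ∃ f : ℕ → StrongDual ℝ X, (∀ x, Tendsto (fun n => f n x) atTop (𝓝 0)) ∧
      ∃ c > 0, ∀ n, c ≤ ‖f n‖ := by
  obtain ⟨H, p, q, x, hH0, hH, hx⟩ := hosc.exists_dyadic_tree
  let eval (y : X) : StrongDual ℝ X →ₗ[ℝ] ℝ := (ContinuousLinearMap.apply ℝ ℝ y).toLinearMap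
  have hbessel : ∀ m y,
      ∑ j ∈ Finset.range m, ‖rademacherCoeff H p q j m 0 y‖ ^ 2 ≤ ‖y‖ ^ 2 := fun m y => by
    have hmid : ∀ m k, H (m + 1) k y = midpoint ℝ (H m (p m k) y) (H m (q m k) y) := fun m k => by
      rw [hH]
      exact (eval y).toAffineMap.map_midpoint _ _
    have hle : ∀ k, ‖H 0 k y‖ ^ 2 ≤ ‖y‖ ^ 2 := fun k => by
      rw [hH0]
      gcongr
      simpa only [one_mul] using (h k).le_of_opNorm_le (hh k) y
    have hsum := (le_add_of_nonneg_left (sq_nonneg _)).trans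
      (norm_sq_add_sum_rademacherCoeff_sq_le (H := fun m k => H m k y) hmid hle m 0)
    have heval : ∀ j, rademacherCoeff H p q j m 0 y =
        rademacherCoeff (fun m k => H m k y) p q j m 0 := fun j =>
      map_rademacherCoeff H p q (eval y) j m 0
    simpa only [heval] using hsum
  obtain ⟨f, hf0, hf⟩ := exists_weakStar_null_tendsto_of_sum_sq_le hbessel
  refine ⟨f, hf0, ε / 2, half_pos hε, fun j => ?_⟩
  have hcoeff : ∀ m > j, ε / 2 * ‖x j‖ ≤ rademacherCoeff H p q j m 0 (x j) := fun m hm =>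
    rademacherCoeff_mem_of_convex H p q (convex_halfSpace_ge (eval (x j)).isLinear _) (fun k => by
      change ε / 2 * ‖x j‖ ≤ 1 / 2 * (H j (p j k) (x j) - H j (q j k) (x j))
      linarith [hx j k]) hm 0
  have hfj : ε / 2 * ‖x j‖ ≤ f j (x j) := ge_of_tendsto (hf j (x j)) <| by
    filter_upwards [(eventually_gt_atTop j).filter_mono Nat.hyperfilter_le_atTop] using hcoeff
  have hxj : 0 < ‖x j‖ := norm_pos_iff.2 fun h0 => by simpa [h0] using hx j 0
  exact le_of_mul_le_mul_right
    (hfj.trans ((Real.le_norm_self _).trans ((f j).le_opNorm (x j)))) hxj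

end HereditarilyOscillates

theorem exists_isConvexTail_cauchySeq {g : ℕ → StrongDual ℝ X}
    (hg : ∀ h, IsConvexTail h g → ∀ ε > 0, ¬ HereditarilyOscillates ε h) :
    ∃ d, IsConvexTail d g ∧ ∀ x, CauchySeq fun n => d n x := by
  simp only [HereditarilyOscillates, not_forall, not_exists, not_frequently, not_lt,
    exists_prop] at hg
  obtain ⟨d, hdg, hd⟩ := IsConvexTail.exists_diagonal fun (j : ℕ) h hh =>
    hg h hh (1 / ((j : ℝ) + 1)) Nat.one_div_pos_of_nat
  refine ⟨d, hdg, fun x => cauchySeq_of_eventually_sub_lt fun ε hε => ?_⟩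
  have hlim : Tendsto (fun j : ℕ => 1 / ((j : ℝ) + 1) * ‖x‖) atTop (𝓝 0) := by
    simpa only [zero_mul] using tendsto_one_div_add_atTop_nhds_zero_nat.mul_const ‖x‖
  obtain ⟨j, hj⟩ := (hlim.eventually_lt_const hε).exists
  obtain ⟨H, hH, hdH⟩ := hd j
  filter_upwards [eventually_sub_le_of_mem_convexHull
    (ContinuousLinearMap.apply ℝ ℝ x).toLinearMap hdH (hH x)] with n hn
  exact hn.trans_lt hj

theorem exists_le_apply_comp_of_not_weakStar_null {z : ℕ → StrongDual ℝ X}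
    (hz : ¬ ∀ x, Tendsto (fun n => z n x) atTop (𝓝 0)) :
    ∃ x, ∃ δ > 0, ∃ φ : ℕ → ℕ, (∀ k, k ≤ φ k) ∧ ∀ k, δ ≤ z (φ k) x := by
  obtain ⟨x, δ, hδ, hfreq⟩ : ∃ x, ∃ δ > 0, ∃ᶠ n in atTop, δ ≤ z n x := by
    contrapose! hz
    refine fun x => Metric.tendsto_nhds.2 fun ε hε => ?_
    filter_upwards [hz x ε hε, hz (-x) ε hε] with n hn hn'
    rw [map_neg] at hn'
    rw [dist_zero_right, Real.norm_eq_abs]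
    exact abs_lt.2 ⟨neg_lt.1 hn', hn⟩
  obtain ⟨φ, hφ, hδφ⟩ := extraction_of_frequently_atTop hfreq
  exact ⟨x, δ, hδ, φ, fun _ => hφ.le_apply, hδφ⟩

theorem exists_weakStar_null_norm_ge_of_cauchySeq {z d : ℕ → StrongDual ℝ X} {r δ : ℝ} {x₀ : X}
    (hr : 0 < r) (hδ : 0 < δ) (hz : SatisfiesGrunblum ℝ r z) (hdz : IsConvexTail d z)
    (hd : ∀ x, CauchySeq fun n => d n x) (hx₀ : ∀ k, δ ≤ d k x₀) :
    ∃ f : ℕ → StrongDual ℝ X, (∀ x, Tendsto (fun n => f n x) atTop (𝓝 0)) ∧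
      ∃ c > 0, ∀ n, c ≤ ‖f n‖ := by
  choose p hp hfar using hz.exists_le_norm_sub_of_isConvexTail hdz
  have hx₀_pos : 0 < ‖x₀‖ := norm_pos_iff.2 fun h0 => hδ.not_ge (by simpa [h0] using hx₀ 0)
  refine ⟨fun k => d k - d (p k), fun x => ?_, r * (δ / ‖x₀‖), by positivity, fun k => ?_⟩
  · obtain ⟨l, hl⟩ := cauchySeq_tendsto_of_complete (hd x)
    simpa using hl.sub (hl.comp (tendsto_atTop_mono hp tendsto_id))
  · have hdk : δ / ‖x₀‖ ≤ ‖d k‖ := (div_le_iff₀ hx₀_pos).2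
      ((hx₀ k).trans ((Real.le_norm_self _).trans ((d k).le_opNorm x₀)))
    exact (mul_le_mul_of_nonneg_left hdk hr.le).trans (hfar k)

theorem exists_weakStar_null_norm_ge_real (hX : ¬ FiniteDimensional ℝ X) :
    ∃ f : ℕ → StrongDual ℝ X, (∀ x, Tendsto (fun n => f n x) atTop (𝓝 0)) ∧
      ∃ c > 0, ∀ n, c ≤ ‖f n‖ := by
  obtain ⟨z, hz1, hz⟩ := exists_satisfiesGrunblum_strongDual hX one_half_lt_one
  by_cases hnull : ∀ x, Tendsto (fun n => z n x) atTop (𝓝 0)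
  · exact ⟨z, hnull, 1, one_pos, fun n => (hz1 n).ge⟩
  obtain ⟨x₀, δ, hδ, φ, hφ, hφδ⟩ := exists_le_apply_comp_of_not_weakStar_null hnull
  have hφz : IsConvexTail (z ∘ φ) z := IsConvexTail.comp z hφ
  by_cases hosc : ∀ h, IsConvexTail h (z ∘ φ) → ∀ ε > 0, ¬ HereditarilyOscillates ε h
  · obtain ⟨d, hdφ, hd⟩ := exists_isConvexTail_cauchySeq hosc
    have hdδ : ∀ k, δ ≤ d k x₀ := hdφ.mem_of_convex
      (convex_halfSpace_ge (ContinuousLinearMap.apply ℝ ℝ x₀).toLinearMap.isLinear δ) hφδ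
    exact exists_weakStar_null_norm_ge_of_cauchySeq one_half_pos hδ hz (hdφ.trans hφz) hd hdδ
  · push Not at hosc
    obtain ⟨h, hhφ, ε, hε, hh⟩ := hosc
    have hball : ∀ k, h k ∈ Metric.closedBall 0 1 := (hhφ.trans hφz).mem_of_convex
      (convex_closedBall 0 1) fun n => mem_closedBall_zero_iff.2 (hz1 n).le
    exact hh.exists_weakStar_null_norm_ge hε fun k => mem_closedBall_zero_iff.1 (hball k)

end Real

variable {𝕜 X : Type*} [RCLike 𝕜] [NormedAddCommGroup X] [NormedSpace 𝕜 X]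

theorem exists_weakStar_null_norm_ge (hX : ¬ FiniteDimensional 𝕜 X) :
    ∃ f : ℕ → StrongDual 𝕜 X, (∀ x, Tendsto (fun n => f n x) atTop (𝓝 0)) ∧
      ∃ c > 0, ∀ n, c ≤ ‖f n‖ := by
  let _ : NormedSpace ℝ X := NormedSpace.restrictScalars ℝ 𝕜 X
  have : IsScalarTower ℝ 𝕜 X := .restrictScalars ℝ 𝕜 X
  obtain ⟨f, hf, c, hc, hfc⟩ := exists_weakStar_null_norm_ge_real (X := X)
    fun _ => hX (Module.Finite.of_restrictScalars_finite ℝ 𝕜 X)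
  refine ⟨fun n => (f n).extendRCLike, fun x => ?_, c, hc, fun n => ?_⟩
  · have hre := (RCLike.continuous_ofReal (K := 𝕜)).tendsto 0 |>.comp (hf x)
    have him := (RCLike.continuous_ofReal (K := 𝕜)).tendsto 0 |>.comp (hf ((RCLike.I : 𝕜) • x))
    simpa [Function.comp_def, StrongDual.extendRCLike_apply]
      using hre.sub (him.const_mul (RCLike.I : 𝕜))
  · rw [StrongDual.norm_extendRCLike]
    exact hfc n

/-- The **Josefson–Nissenzweig theorem**. -/
theorem exists_weakStar_null_norm_eq_one (hX : ¬ FiniteDimensional 𝕜 X) :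
    ∃ f : ℕ → StrongDual 𝕜 X, (∀ x, Tendsto (fun n => f n x) atTop (𝓝 0)) ∧ ∀ n, ‖f n‖ = 1 := by
  obtain ⟨f, hf, c, hc, hfc⟩ := exists_weakStar_null_norm_ge hX
  have hpos : ∀ n, 0 < ‖f n‖ := fun n => hc.trans_le (hfc n)
  refine ⟨fun n => (‖f n‖ : 𝕜)⁻¹ • f n, fun x => ?_,
    fun n => norm_smul_inv_norm (norm_pos_iff.1 (hpos n))⟩
  refine squeeze_zero_norm (a := fun n => c⁻¹ * ‖f n x‖) (fun n => ?_)
    (by simpa only [norm_zero, mul_zero] using (hf x).norm.const_mul c⁻¹)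
  rw [smul_apply, norm_smul, norm_inv, RCLike.norm_ofReal, abs_norm]
  gcongr
  exact hfc n

end JosefsonNissenzweig

section ZeroAtInfty

variable {α : Type*} [TopologicalSpace α]

section Norm

variable {β : Type*} [SeminormedAddCommGroup β]

theorem norm_apply_le_norm_zeroAtInfty (u : C₀(α, β)) (a : α) : ‖u a‖ ≤ ‖u‖ :=
  u.toBCF.norm_coe_le_norm a

theorem norm_zeroAtInfty_le {u : C₀(α, β)} {C : ℝ} (hC : 0 ≤ C) (hu : ∀ a, ‖u a‖ ≤ C) :
    ‖u‖ ≤ C :=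
  (BoundedContinuousFunction.norm_le (f := u.toBCF) hC).2 hu

theorem exists_norm_apply_eq_norm_zeroAtInfty [Nonempty α] (u : C₀(α, β)) :
    ∃ a, ‖u a‖ = ‖u‖ := by
  suffices ∃ a, ∀ b, ‖u b‖ ≤ ‖u a‖ by
    obtain ⟨a, ha⟩ := this
    exact ⟨a, (norm_apply_le_norm_zeroAtInfty u a).antisymm
      (norm_zeroAtInfty_le (norm_nonneg _) ha)⟩
  by_cases hu : ∃ a, 0 < ‖u a‖
  · obtain ⟨a, ha⟩ := hu
    have hlt : ∀ᶠ b in cocompact α, ‖u b‖ < ‖u a‖ :=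
      (tendsto_zero_iff_norm_tendsto_zero.1 u.zero_at_infty').eventually_lt_const ha
    exact (map_continuous u).norm.exists_forall_ge' a (hlt.mono fun _ => le_of_lt)
  · push Not at hu
    exact ⟨Classical.arbitrary α, fun b => (hu b).trans (norm_nonneg _)⟩

end Norm

variable {𝕜 X F : Type*} [NontriviallyNormedField 𝕜] [SeminormedAddCommGroup X] [NormedSpace 𝕜 X]
  [NormedAddCommGroup F] [NormedSpace 𝕜 F]

theorem exists_clm_zeroAtInfty_apply_eq {f : α → X →L[𝕜] F} {C : ℝ}
    (hcont : ∀ x, Continuous fun a => f a x)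
    (hzero : ∀ x, Tendsto (fun a => f a x) (cocompact α) (𝓝 0)) (hC : ∀ a, ‖f a‖ ≤ C) :
    ∃ T : X →L[𝕜] C₀(α, F), ∀ x a, T x a = f a x := by
  let L : X →ₗ[𝕜] C₀(α, F) :=
    { toFun := fun x => ⟨⟨fun a => f a x, hcont x⟩, hzero x⟩
      map_add' := fun x y => by ext a; exact map_add (f a) x y
      map_smul' := fun c x => by ext a; exact map_smul (f a) c x }
  refine ⟨L.mkContinuous (max C 0) fun x => ?_, fun _ _ => rfl⟩
  exact norm_zeroAtInfty_le (by positivity) fun a =>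
    (f a).le_of_opNorm_le ((hC a).trans (le_max_left _ _)) x

theorem norm_lt_of_mem_closure_image_closedBall [Nonempty α] {T : X →L[𝕜] C₀(α, F)} {R : ℝ}
    (hT : ∀ a, ∃ c < R, ∀ x ∈ Metric.closedBall 0 1, ‖T x a‖ ≤ c) {u : C₀(α, F)}
    (hu : u ∈ closure (T '' Metric.closedBall 0 1)) : ‖u‖ < R := by
  obtain ⟨a, ha⟩ := exists_norm_apply_eq_norm_zeroAtInfty u
  obtain ⟨c, hcR, hc⟩ := hT a
  have heval : Continuous fun v : C₀(α, F) => v a :=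
    (continuous_eval_const (F := BoundedContinuousFunction α F) a).comp
      (ZeroAtInftyContinuousMap.isometry_toBCF (α := α) (β := F)).continuous
  have hclosed : IsClosed {v : C₀(α, F) | ‖v a‖ ≤ c} := isClosed_le heval.norm continuous_const
  have huc : ‖u a‖ ≤ c := closure_minimal (forall_mem_image.2 hc) hclosed hu
  exact (ha.symm.trans_le huc).trans_lt hcR

end ZeroAtInfty

theorem exists_operator_to_c0_not_quasi_attaining_general {𝕜 X : Type*} [RCLike 𝕜]
    [NormedAddCommGroup X] [NormedSpace 𝕜 X] (hX : ¬ FiniteDimensional 𝕜 X) :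
    ∃ T : X →L[𝕜] C₀(ℕ, 𝕜), ¬ ∃ u ∈ closure (⇑T '' Metric.closedBall 0 1), ‖u‖ = ‖T‖ := by
  obtain ⟨f, hf, hf1⟩ := exists_weakStar_null_norm_eq_one hX
  let w : ℕ → ℝ := fun n => n / (n + 1)
  have hw1 : ∀ n, w n < 1 := fun n => (div_lt_one n.cast_add_one_pos).2 (lt_add_one _)
  have hw : Tendsto w atTop (𝓝 1) := tendsto_natCast_div_add_atTop 1
  have hnorm : ∀ n, ‖(w n : 𝕜) • f n‖ = w n := fun n => by
    rw [norm_smul, hf1, mul_one, RCLike.norm_of_nonneg (by positivity)]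
  have hzero : ∀ x, Tendsto (fun n => ((w n : 𝕜) • f n) x) (cocompact ℕ) (𝓝 0) := fun x => by
    rw [cocompact_eq_atTop]
    simpa using ((RCLike.continuous_ofReal.tendsto 1).comp hw).mul (hf x)
  obtain ⟨T, hT⟩ := exists_clm_zeroAtInfty_apply_eq (fun _ => continuous_of_discreteTopology) hzero
    fun n => (hnorm n).trans_le (hw1 n).le
  have hwT : ∀ n, w n ≤ ‖T‖ := fun n => (hnorm n).symm.trans_le <|
    ((w n : 𝕜) • f n).opNorm_le_bound (norm_nonneg T) fun x => by
      rw [← hT]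
      exact (norm_apply_le_norm_zeroAtInfty (T x) n).trans (T.le_opNorm x)
  refine ⟨T, fun ⟨u, hu, huT⟩ => (norm_lt_of_mem_closure_image_closedBall (R := 1) ?_ hu).not_ge
    ((le_of_tendsto' hw hwT).trans_eq huT.symm)⟩
  refine fun n => ⟨w n, hw1 n, fun x hx => ?_⟩
  rw [hT]
  exact (((w n : 𝕜) • f n).unit_le_opNorm x (mem_closedBall_zero_iff.1 hx)).trans_eq (hnorm n)

/-- for every infinite-dimensional Banach space `X` there exists a bounded linear
operator `T : X → c₀` which does not quasi attain its norm. -/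
theorem exists_operator_to_c0_not_quasi_attaining {𝕜 X : Type*} [RCLike 𝕜]
    [NormedAddCommGroup X] [NormedSpace 𝕜 X] [CompleteSpace X]
    (hX : ¬ FiniteDimensional 𝕜 X) :
    ∃ T : X →L[𝕜] C₀(ℕ, 𝕜), ¬ ∃ u ∈ closure (⇑T '' Metric.closedBall 0 1), ‖u‖ = ‖T‖ :=
  exists_operator_to_c0_not_quasi_attaining_general hX
end
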